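/- arXiv:0710.3991 — 4 statements merged into one kernel-verified Lean document; each statement's English description precedes it below -/
import Mathlib

section
/- Let F ⊂ Sym²(ℝⁿ) be a Dirichlet set with Dirichlet dual F̃, X ⊂ ℝⁿ open, and λ > 0. If u, v : X → ℝ are locally λ-quasiconvex functions with u of type F on X and v of type F̃ on X, then u + v is subaffine on X. -/
open Set Metric Filter MeasureTheory Asymptotics
open scoped Topology BigOperators RealInnerProductSpace

noncomputable section

abbrev Euc (n : ℕ) : Type := EuclideanSpace ℝ (Fin n)

abbrev SymMat (n : ℕ) : Type := ↥(selfAdjoint (Matrix (Fin n) (Fin n) ℝ))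

/-- `u` is subaffine on `X`. -/
def SubaffineOn {n : ℕ} (X : Set (Euc n)) (u : Euc n → EReal) : Prop :=
  ∀ K : Set (Euc n), IsCompact K → K ⊆ X →
    ∀ a : Euc n →ᵃ[ℝ] ℝ,
      (∀ x ∈ frontier K, u x ≤ (a x : EReal)) → ∀ x ∈ K, u x ≤ (a x : EReal)

/-- The Hessian matrix of `u` at `x`. -/
def hessMat {n : ℕ} (u : Euc n → ℝ) (x : Euc n) : Matrix (Fin n) (Fin n) ℝ :=
  fun i j => iteratedFDeriv ℝ 2 u x ![EuclideanSpace.single i 1, EuclideanSpace.single j 1]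

structure IsDirichletSet {n : ℕ} (F : Set (SymMat n)) : Prop where
  nonempty : F.Nonempty
  ne_univ : F ≠ Set.univ
  isClosed : IsClosed F
  add_psd : ∀ A ∈ F, ∀ P : SymMat n, (P : Matrix (Fin n) (Fin n) ℝ).PosSemidef → A + P ∈ F

/-- The Dirichlet dual `F̃ = −(∼ Int F)`. -/
def dirDual {n : ℕ} (F : Set (SymMat n)) : Set (SymMat n) := {A | -A ∉ interior F}

/-- A C² function `v` on `X` is of type `F`. -/
def IsTypeFC2 {n : ℕ} (F : Set (SymMat n)) (X : Set (Euc n)) (v : Euc n → ℝ) : Prop :=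
  ContDiffOn ℝ 2 v X ∧ ∀ x ∈ X, ∃ A ∈ F, (A : Matrix (Fin n) (Fin n) ℝ) = hessMat v x

/-- An u.s.c. function `u` is of type `F` on `X`. -/
def IsTypeF {n : ℕ} (F : Set (SymMat n)) (X : Set (Euc n)) (u : Euc n → EReal) : Prop :=
  ∀ v : Euc n → ℝ, IsTypeFC2 (dirDual F) X v → SubaffineOn X (fun x => u x + (v x : EReal))

/-- The ray set `F⃗` of `F`. -/
def raySet {n : ℕ} (F : Set (SymMat n)) : Set (SymMat n) :=
  closure {A : SymMat n | ∃ t₀ : ℝ, ∀ t : ℝ, t₀ ≤ t → t • A ∈ F}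

/-- The bilinear form `⟨A v, w⟩` of a matrix. -/
def bilin {n : ℕ} (A : Matrix (Fin n) (Fin n) ℝ) (v w : Euc n) : ℝ :=
  ∑ i, ∑ j, A i j * v i * w j

/-- `A` is not negative definite. -/
def NotNegDef {n : ℕ} (A : SymMat n) : Prop :=
  ¬ (-(A : Matrix (Fin n) (Fin n) ℝ)).PosDef

def IsLocalDefiningFn {n : ℕ} (Ω U : Set (Euc n)) (ρ : Euc n → ℝ) : Prop :=
  IsOpen U ∧ ContDiffOn ℝ (⊤ : ℕ∞) ρ U ∧ Ω ∩ U = {y ∈ U | ρ y < 0} ∧ ∀ y ∈ U, fderiv ℝ ρ y ≠ 0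

def HasSmoothBoundary {n : ℕ} (Ω : Set (Euc n)) : Prop :=
  ∀ x ∈ frontier Ω, ∃ U ρ, x ∈ U ∧ IsLocalDefiningFn Ω U ρ

/-- `∂Ω` is strictly `G`-convex at `x`. -/
def StrictlyConvexAt {n : ℕ} (G : Set (SymMat n)) (Ω : Set (Euc n)) (x : Euc n) : Prop :=
  ∃ U ρ, x ∈ U ∧ IsLocalDefiningFn Ω U ρ ∧
    ∃ B ∈ interior G, ∀ v w : Euc n, fderiv ℝ ρ x v = 0 → fderiv ℝ ρ x w = 0 →
      bilin (hessMat ρ x) v w = bilin (B : Matrix (Fin n) (Fin n) ℝ) v w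

def symOne (n : ℕ) : SymMat n := ⟨1, selfAdjoint.mem_iff.mpr (IsSelfAdjoint.one _)⟩

/-- `u` is twice differentiable at `x` with Hessian `A`. -/
def TwiceDiffWithHessAt {n : ℕ} (u : Euc n → ℝ) (x : Euc n)
    (A : Matrix (Fin n) (Fin n) ℝ) : Prop :=
  ∃ p : Euc n, (fun h : Euc n => u (x + h) - u x - ⟪p, h⟫ - 1/2 * bilin A h h)
      =o[𝓝 (0 : Euc n)] fun h => ‖h‖ ^ 2

section helpers

variable {E : Type*} [NormedAddCommGroup E] [InnerProductSpace ℝ E]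

def Touch (f : E → ℝ) (c : ℝ) (B : Set E) (x a : E) : Prop :=
  ∀ y ∈ B, f x + ⟪a, y - x⟫ ≤ f y ∧ f y ≤ f x + ⟪a, y - x⟫ + c * ‖y - x‖ ^ 2

lemma expand_step {f : E → ℝ} {c : ℝ} {B : Set E} {x z a0 az h : E} {A : E →L[ℝ] E} {s t e : ℝ}
    (hc : 0 ≤ c) (he : 0 ≤ e) (he1 : e ≤ 1)
    (hT : Touch f c B z az) (hs : x + s • h ∈ B) (ht : x + t • h ∈ B)
    (ht0 : 0 ≤ t) (ht1 : t ≤ 1) (hst : |s - t| ≤ e)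
    (hz : ‖z - (x + t • h)‖ ≤ e * ‖h‖)
    (hA : ‖az - a0 - A (z - x)‖ ≤ e * ‖z - x‖) :
    (f (x + s • h) - s * ⟪a0, h⟫ - 1/2 * s^2 * ⟪A h, h⟫)
      - (f (x + t • h) - t * ⟪a0, h⟫ - 1/2 * t^2 * ⟪A h, h⟫)
      ≤ 3 * (2 + ‖A‖ + 2 * c) * (e ^ 2 * ‖h‖ ^ 2) := by
  have h1 := (hT _ hs).2
  have h2 := (hT _ ht).1
  set w := z - (x + t • h) with hw
  have hzx : z - x = w + t • h := by rw [hw]; abel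
  have e1 : x + s • h - z = (s - t) • h - w := by rw [hw, sub_smul]; abel
  have e2 : x + t • h - z = - w := by rw [hw]; abel
  set d := az - a0 - A (z - x) with hd
  have haz : az = d + a0 + A w + t • A h := by
    rw [hd, hzx, map_add, map_smul]; abel
  have h3 : f (x + s • h) - f (x + t • h) ≤ (s - t) * ⟪az, h⟫ + c * ‖(s - t) • h - w‖ ^ 2 := by
    rw [e1, inner_sub_right, inner_smul_right] at h1
    rw [e2, inner_neg_right] at h2
    linarith
  have h4 : ⟪az, h⟫ = ⟪d, h⟫ + ⟪a0, h⟫ + ⟪A w, h⟫ + t * ⟪A h, h⟫ := by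
    rw [haz]; simp [inner_add_left, inner_smul_left]
  have hr := norm_nonneg h
  have hAn := norm_nonneg A
  have hzn : ‖z - x‖ ≤ 2 * ‖h‖ := by
    rw [hzx]
    calc _ ≤ ‖w‖ + ‖t • h‖ := norm_add_le _ _
      _ ≤ e * ‖h‖ + 1 * ‖h‖ := by
        rw [norm_smul, Real.norm_of_nonneg ht0]; gcongr
      _ ≤ _ := by nlinarith
  have b1 : (s - t) * ⟪d, h⟫ ≤ 2 * (e ^ 2 * ‖h‖^2) := by
    calc _ ≤ |(s - t) * ⟪d, h⟫| := le_abs_self _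
      _ = |s - t| * |⟪d, h⟫| := abs_mul _ _
      _ ≤ e * ((e * (2 * ‖h‖)) * ‖h‖) := by
        gcongr
        refine (abs_real_inner_le_norm _ _).trans ?_
        gcongr
        exact hA.trans (by gcongr)
      _ = _ := by ring
  have b2 : (s - t) * ⟪A w, h⟫ ≤ ‖A‖ * (e ^ 2 * ‖h‖^2) := by
    calc _ ≤ |(s - t) * ⟪A w, h⟫| := le_abs_self _
      _ = |s - t| * |⟪A w, h⟫| := abs_mul _ _
      _ ≤ e * ((‖A‖ * (e * ‖h‖)) * ‖h‖) := by
        gcongr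
        refine (abs_real_inner_le_norm _ _).trans ?_
        gcongr
        exact (A.le_opNorm _).trans (by gcongr)
      _ = _ := by ring
  have hst2 : (s - t) ^ 2 ≤ e ^ 2 := by rw [← sq_abs]; gcongr
  have b3 : -(1/2) * (s - t)^2 * ⟪A h, h⟫ ≤ ‖A‖ * (e ^ 2 * ‖h‖^2) := by
    have q : |⟪A h, h⟫| ≤ ‖A‖ * ‖h‖ ^ 2 := by
      refine (abs_real_inner_le_norm _ _).trans ?_
      calc _ ≤ (‖A‖ * ‖h‖) * ‖h‖ := by gcongr; exact A.le_opNorm _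
        _ = _ := by ring
    have q1 := neg_abs_le ⟪A h, h⟫
    calc _ = (1/2) * ((s - t)^2 * (-⟪A h, h⟫)) := by ring
      _ ≤ (1/2) * ((s - t)^2 * (‖A‖ * ‖h‖ ^ 2)) := by gcongr; linarith
      _ ≤ (1/2) * (e^2 * (‖A‖ * ‖h‖ ^ 2)) := by gcongr
      _ ≤ _ := by
        have : 0 ≤ e^2 * (‖A‖ * ‖h‖ ^ 2) := by positivity
        nlinarith
  have b4 : c * ‖(s - t) • h - w‖ ^ 2 ≤ 4 * c * (e ^ 2 * ‖h‖^2) := by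
    have : ‖(s - t) • h - w‖ ≤ 2 * (e * ‖h‖) := by
      calc _ ≤ ‖(s - t) • h‖ + ‖w‖ := norm_sub_le _ _
        _ ≤ e * ‖h‖ + e * ‖h‖ := by
          rw [norm_smul, Real.norm_eq_abs]; gcongr
        _ = _ := by ring
    calc _ ≤ c * (2 * (e * ‖h‖)) ^ 2 := by gcongr
      _ = _ := by ring
  have hp : 0 ≤ e ^ 2 * ‖h‖ ^ 2 := by positivity
  have hp1 : 0 ≤ ‖A‖ * (e ^ 2 * ‖h‖ ^ 2) := by positivity
  have hp2 : 0 ≤ c * (e ^ 2 * ‖h‖ ^ 2) := by positivity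
  rw [h4] at h3
  nlinarith

lemma expand {f : E → ℝ} {c : ℝ} {B C : Set E} {x : E} {α : E → E} {A : E →L[ℝ] E}
    (hc : 0 ≤ c) (hB : B ∈ 𝓝 x) (hT : ∀ z ∈ C, Touch f c B z (α z))
    (hnet : ∀ ε > 0, ∀ᶠ r in 𝓝[>] (0:ℝ), ∀ y : E, ‖y‖ ≤ r → ∃ z ∈ C, ‖z - (x + y)‖ ≤ ε * r)
    (hA : HasFDerivWithinAt α A C x) {ε : ℝ} (hε : 0 < ε) :
    ∀ᶠ h in 𝓝 (0 : E), |f (x + h) - f x - ⟪α x, h⟫ - 1/2 * ⟪A h, h⟫| ≤ ε * ‖h‖ ^ 2 := by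
  set M := 3 * (2 + ‖A‖ + 2 * c) with hM
  have hM0 : 0 < M := by positivity
  obtain ⟨N, hN⟩ := exists_nat_gt (M / ε)
  have hN0 : 0 < (N : ℝ) := lt_trans (by positivity) hN
  have hN1 : 1 ≤ (N : ℝ) := by
    have : 0 < N := by exact_mod_cast hN0
    exact_mod_cast this
  set e : ℝ := 1 / N with he
  have he0 : 0 < e := by positivity
  have he1 : e ≤ 1 := by rw [he, div_le_one hN0]; exact hN1
  obtain ⟨ρ, hρ, hρB⟩ := Metric.mem_nhds_iff.1 hB
  have hA' : ∀ᶠ z in 𝓝[C] x, ‖α z - α x - A (z - x)‖ ≤ e * ‖z - x‖ :=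
    (hasFDerivWithinAt_iff_isLittleO.1 hA).def he0
  rw [eventually_nhdsWithin_iff] at hA'
  obtain ⟨ρ2, hρ2, hA2⟩ := Metric.eventually_nhds_iff.1 hA'
  obtain ⟨ρ3, hρ3, hn⟩ := (mem_nhdsGT_iff_exists_Ioo_subset' (show (0:ℝ) < 1 by norm_num)).1
    (hnet e he0)
  have hpos : 0 < min ρ (min (ρ2/2) ρ3) := lt_min hρ (lt_min (by positivity) hρ3)
  filter_upwards [Metric.ball_mem_nhds (0:E) hpos] with h hh
  rw [mem_ball_zero_iff, lt_min_iff, lt_min_iff] at hh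
  obtain ⟨hh1, hh2, hh3⟩ := hh
  rcases eq_or_ne h 0 with rfl | hne
  · simp
  have hn0 : 0 < ‖h‖ := norm_pos_iff.2 hne
  have hmem : ∀ t : ℝ, 0 ≤ t → t ≤ 1 → x + t • h ∈ B ∧ ‖t • h‖ ≤ ‖h‖ := by
    intro t h0 h1
    have : ‖t • h‖ ≤ ‖h‖ := by
      rw [norm_smul, Real.norm_of_nonneg h0]; nlinarith
    exact ⟨hρB (by simpa using this.trans_lt hh1), this⟩
  set D : ℝ → ℝ := fun s => f (x + s • h) - s * ⟪α x, h⟫ - 1/2 * s^2 * ⟪A h, h⟫ with hD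
  have key : ∀ s t : ℝ, 0 ≤ s → s ≤ 1 → 0 ≤ t → t ≤ 1 → |s - t| ≤ e →
      D s - D t ≤ M * (e^2 * ‖h‖^2) := by
    intro s t hs0 hs1 ht0 ht1 hst
    obtain ⟨z, hzC, hz⟩ := hn ⟨hn0, hh3⟩ (t • h) (hmem t ht0 ht1).2
    have hzx : ‖z - x‖ ≤ 2 * ‖h‖ := by
      have : z - x = (z - (x + t • h)) + t • h := by abel
      rw [this]
      refine (norm_add_le _ _).trans ?_
      have := (hmem t ht0 ht1).2
      nlinarith
    refine expand_step hc he0.le he1 (hT z hzC) (hmem s hs0 hs1).1 (hmem t ht0 ht1).1 ht0 ht1 hst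
      hz (hA2 (by rw [dist_eq_norm]; linarith) hzC)
  have key2 : ∀ k : ℕ, k ≤ N → |D (k * e) - D 0| ≤ k * (M * (e^2 * ‖h‖^2)) := by
    intro k
    induction k with
    | zero => intro _; simp
    | succ k ih =>
      intro hk
      have ih' := ih (by omega)
      have hkN : ((k + 1 : ℕ) : ℝ) ≤ N := by exact_mod_cast hk
      have hNe : (N:ℝ) * e = 1 := by rw [he]; field_simp
      have a1 : ((k + 1 : ℕ) : ℝ) * e ≤ 1 := by rw [← hNe]; gcongr
      have a0 : (0:ℝ) ≤ ((k + 1 : ℕ) : ℝ) * e := by positivity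
      have a2 : (0:ℝ) ≤ (k:ℝ) * e := by positivity
      have a3 : (k : ℝ) * e ≤ 1 := by push_cast at a1; nlinarith
      have a4 : ((k + 1 : ℕ) : ℝ) * e - k * e = e := by push_cast; ring
      have k1 := key _ _ a0 a1 a2 a3 (by rw [a4, abs_of_pos he0])
      have k2 := key _ _ a2 a3 a0 a1 (by rw [abs_sub_comm, a4, abs_of_pos he0])
      rw [abs_le] at ih' ⊢
      push_cast at *
      constructor <;> linarith [ih'.1, ih'.2]
  have fin := key2 N le_rfl
  have hNe : (N:ℝ) * e = 1 := by rw [he]; field_simp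
  rw [hNe] at fin
  have e1 : D 1 - D 0 = f (x + h) - f x - ⟪α x, h⟫ - 1/2 * ⟪A h, h⟫ := by
    simp [hD]; ring
  rw [e1] at fin
  refine fin.trans ?_
  have : (N:ℝ) * (M * (e^2 * ‖h‖^2)) = (M * e) * ‖h‖^2 := by
    calc _ = (N * e) * ((M * e) * ‖h‖^2) := by ring
      _ = _ := by rw [hNe, one_mul]
  rw [this]
  gcongr
  rw [he, mul_one_div, div_le_iff₀ hN0]
  rw [div_lt_iff₀ hε] at hN
  linarith

lemma exists_subgrad [FiniteDimensional ℝ E] {f : E → ℝ} {s : Set E} (hs : IsOpen s)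
    (hf : ConvexOn ℝ s f) {x : E} (hx : x ∈ s) : ∃ a : E, ∀ y ∈ s, f x + ⟪a, y - x⟫ ≤ f y := by
  have hcont : ContinuousOn f s := hf.continuousOn hs
  have hopen : IsOpen {p : E × ℝ | p.1 ∈ s ∧ f p.1 < p.2} := by
    rw [isOpen_iff_mem_nhds]
    rintro ⟨y, t⟩ ⟨hy, hyt⟩
    have c1 : ContinuousAt (fun p : E × ℝ => f p.1) (y, t) :=
      ContinuousAt.comp (f := Prod.fst) (hcont.continuousAt (hs.mem_nhds hy)) continuousAt_fst
    have h1 : ∀ᶠ p : E × ℝ in 𝓝 (y, t), f p.1 < p.2 :=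
      c1.eventually_lt continuousAt_snd hyt
    have h2 : ∀ᶠ p : E × ℝ in 𝓝 (y, t), p.1 ∈ s :=
      continuousAt_fst.eventually (hs.mem_nhds hy)
    filter_upwards [h1, h2] with p a b using ⟨b, a⟩
  obtain ⟨φ, hφ⟩ := geometric_hahn_banach_open_point hf.convex_strict_epigraph hopen
    (x := (x, f x)) (by simp)
  have hsplit : ∀ y t, φ (y, t) = φ (y, 0) + t * φ (0, 1) := by
    intro y t
    have : (y, t) = (y, (0:ℝ)) + t • ((0 : E), (1:ℝ)) := by simp
    rw [this, map_add, map_smul, smul_eq_mul]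
  set k := φ (0, 1) with hk
  have hk0 : k < 0 := by
    have := hφ (x, f x + 1) ⟨hx, by simp⟩
    rw [hsplit x (f x + 1), hsplit x (f x)] at this
    linarith
  let ψ : StrongDual ℝ E := φ.comp (ContinuousLinearMap.inl ℝ E ℝ)
  have hψ : ∀ y, ψ y = φ (y, 0) := fun y => rfl
  refine ⟨(-k)⁻¹ • (InnerProductSpace.toDual ℝ E).symm ψ, fun y hy => ?_⟩
  rw [real_inner_smul_left, InnerProductSpace.toDual_symm_apply, map_sub, hψ, hψ]
  have hle : φ (y, 0) + f y * k ≤ φ (x, 0) + f x * k := by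
    refine le_of_forall_pos_lt_add fun ε hε => ?_
    have := hφ (y, f y + ε / (-k)) ⟨hy, by
      have : 0 < ε / (-k) := div_pos hε (by linarith)
      simpa using this⟩
    rw [hsplit y, hsplit x] at this
    have e : ε / (-k) * k = -ε := by
      have : k ≠ 0 := hk0.ne
      field_simp
    nlinarith
  have hk' : 0 < -k := by linarith
  have : (-k)⁻¹ * (φ (y, 0) - φ (x, 0)) ≤ f y - f x := by
    rw [inv_mul_le_iff₀ hk']; nlinarith
  linarith

lemma touch_of_contact {f g : E → ℝ} {c : ℝ} {B : Set E} {x a b p : E} (hB : B ∈ 𝓝 x)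
    (ha : ∀ y ∈ B, f x + ⟪a, y - x⟫ ≤ f y) (hb : ∀ y ∈ B, g x + ⟪b, y - x⟫ ≤ g y)
    (hp : ∀ y ∈ B, f y + g y - c * ‖y‖^2 - ⟪p, y⟫ ≤ f x + g x - c * ‖x‖^2 - ⟪p, x⟫) :
    Touch f c B x a ∧ Touch g c B x b ∧ p = a + b - (2 * c) • x := by
  have hid : ∀ y : E, c * ‖y‖^2 - c * ‖x‖^2 = c * ‖y - x‖^2 + ⟪(2 * c) • x, y - x⟫ := by
    intro y
    rw [norm_sub_sq_real, inner_smul_left, inner_sub_right, real_inner_self_eq_norm_sq,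
      real_inner_comm]
    simp; ring
  have hmain : ∀ y ∈ B, ⟪a + b - (2 * c) • x - p, y - x⟫ ≤ c * ‖y - x‖^2 := by
    intro y hy
    have h1 := ha y hy
    have h2 := hb y hy
    have h3 := hp y hy
    have h4 := hid y
    simp only [inner_sub_left, inner_add_left, inner_sub_right] at *
    linarith
  have hq : a + b - (2 * c) • x - p = 0 := by
    set q := a + b - (2 * c) • x - p
    have ht : Tendsto (fun t : ℝ => x + t • q) (𝓝[>] 0) (𝓝 x) := by
      have : ContinuousAt (fun t : ℝ => x + t • q) 0 := by fun_prop
      have h := this.tendsto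
      simp only [zero_smul, add_zero] at h
      exact h.mono_left nhdsWithin_le_nhds
    have hev : ∀ᶠ t : ℝ in 𝓝[>] 0, ‖q‖^2 ≤ c * t * ‖q‖^2 := by
      filter_upwards [ht hB, self_mem_nhdsWithin] with t h1 h2
      have := hmain _ h1
      rw [add_sub_cancel_left, inner_smul_right, real_inner_self_eq_norm_sq, norm_smul,
        Real.norm_of_nonneg (le_of_lt h2)] at this
      have h2' : (0:ℝ) < t := h2
      refine le_of_mul_le_mul_left ?_ h2'
      linarith
    have hl : Tendsto (fun t : ℝ => c * t * ‖q‖^2) (𝓝[>] 0) (𝓝 0) := by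
      have : ContinuousAt (fun t : ℝ => c * t * ‖q‖^2) 0 := by fun_prop
      have h := this.tendsto
      simp only [mul_zero, zero_mul] at h
      exact h.mono_left nhdsWithin_le_nhds
    have := ge_of_tendsto hl hev
    have : ‖q‖ = 0 := by
      have := norm_nonneg q
      nlinarith
    simpa using this
  have hpe : p = a + b - (2 * c) • x := (sub_eq_zero.1 hq).symm
  refine ⟨fun y hy => ⟨ha y hy, ?_⟩, fun y hy => ⟨hb y hy, ?_⟩, hpe⟩
  all_goals
    have h1 := ha y hy
    have h2 := hb y hy
    have h3 := hp y hy
    have h4 := hid y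
    rw [hpe] at h3
    simp only [inner_sub_left, inner_add_left, inner_sub_right] at *
    linarith

lemma touch_lipschitz {f : E → ℝ} {c r : ℝ} (hc : 0 ≤ c) {x0 : E} {C : Set E} {α : E → E}
    (hC : C ⊆ ball x0 (r / 3)) (hT : ∀ z ∈ C, Touch f c (ball x0 r) z (α z)) :
    LipschitzOnWith (Real.toNNReal (4 * c)) α C := by
  refine LipschitzOnWith.of_dist_le_mul fun x hx x' hx' => ?_
  rw [Real.coe_toNNReal _ (by positivity), dist_eq_norm, dist_eq_norm]
  set d := ‖x - x'‖ with hd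
  have hxb : ‖x - x0‖ < r / 3 := by simpa [dist_eq_norm] using hC hx
  have hxb' : ‖x' - x0‖ < r / 3 := by simpa [dist_eq_norm] using hC hx'
  have hdr : d < r / 3 + r / 3 := by
    have : x - x' = (x - x0) - (x' - x0) := by abel
    rw [hd, this]
    exact (norm_sub_le _ _).trans_lt (by linarith)
  have hd0 : 0 ≤ d := norm_nonneg _
  set q := α x' - α x with hq
  rw [norm_sub_rev, ← hq]
  rcases eq_or_ne q 0 with h0 | h0
  · rw [h0]; simp; positivity
  have hqn : 0 < ‖q‖ := norm_pos_iff.2 h0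
  rcases hd0.eq_or_lt with hz | hdpos
  · have : x = x' := by
      rw [hd] at hz; exact sub_eq_zero.1 (norm_eq_zero.1 hz.symm)
    exact absurd (by rw [hq, this, sub_self]) h0
  set w := (d / ‖q‖) • q with hw
  have hwn : ‖w‖ = d := by
    rw [hw, norm_smul, Real.norm_of_nonneg (by positivity)]; field_simp
  have hy : x' + w ∈ ball x0 r := by
    rw [mem_ball, dist_eq_norm]
    have : x' + w - x0 = (x' - x0) + w := by abel
    rw [this]
    exact (norm_add_le _ _).trans_lt (by linarith)
  have hx'b : x' ∈ ball x0 r := by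
    rw [mem_ball, dist_eq_norm]; linarith [norm_nonneg (x' - x0)]
  have h1 := (hT x' hx' _ hy).1
  have h2 := (hT x hx _ hy).2
  have h3 := (hT x hx _ hx'b).1
  have e1 : x' + w - x' = w := by abel
  have e2 : x' + w - x = (x' - x) + w := by abel
  rw [e1] at h1
  rw [e2, inner_add_right] at h2
  have h4 : ‖(x' - x) + w‖ ≤ 2 * d := by
    refine (norm_add_le _ _).trans ?_
    rw [norm_sub_rev, hwn]; linarith
  have h5 : c * ‖(x' - x) + w‖ ^ 2 ≤ c * (2 * d)^2 := by gcongr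
  have h6 : ⟪q, w⟫ = d * ‖q‖ := by
    rw [hw, inner_smul_right, real_inner_self_eq_norm_sq]; field_simp
  have h7 : ⟪q, w⟫ = ⟪α x', w⟫ - ⟪α x, w⟫ := by rw [hq, inner_sub_left]
  have h8 : d * ‖q‖ ≤ d * (4 * c * d) := by nlinarith
  exact le_of_mul_le_mul_left h8 hdpos

open scoped Pointwise in
lemma net_of_density [FiniteDimensional ℝ E] [MeasurableSpace E] [BorelSpace E]
    (μ : Measure E) [μ.IsAddHaarMeasure] {C : Set E} {x : E}
    (h : Tendsto (fun r => μ (C ∩ closedBall x r) / μ (closedBall x r)) (𝓝[>] 0) (𝓝 1))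
    {ε : ℝ} (hε : 0 < ε) :
    ∀ᶠ r in 𝓝[>] (0:ℝ), ∀ y : E, ‖y‖ ≤ r → ∃ z ∈ C, ‖z - (x + y)‖ ≤ ε * r := by
  obtain ⟨t, -, tfin, ht⟩ := finite_cover_balls_of_compact (isCompact_closedBall (0:E) 1)
    (half_pos hε)
  have h1 : ∀ᶠ r in 𝓝[>] (0:ℝ), ∀ w ∈ t, (C ∩ ({x} + r • ball w (ε / 2))).Nonempty := by
    rw [tfin.eventually_all]
    intro w _
    exact Measure.eventually_nonempty_inter_smul_of_density_one μ C x h _ measurableSet_ball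
      (measure_ball_pos μ w (half_pos hε)).ne'
  filter_upwards [h1, self_mem_nhdsWithin] with r hr hr0 y hy
  have hr0 : 0 < r := hr0
  have hy1 : r⁻¹ • y ∈ closedBall (0:E) 1 := by
    rw [mem_closedBall_zero_iff, norm_smul, Real.norm_of_nonneg (by positivity),
      inv_mul_le_iff₀ hr0]
    simpa using hy
  obtain ⟨w, hwt, hw⟩ := mem_iUnion₂.1 (ht hy1)
  obtain ⟨z, hzC, hz⟩ := hr w hwt
  obtain ⟨x', hx', v, hv, rfl⟩ := Set.mem_add.1 hz
  rw [mem_singleton_iff] at hx'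
  subst hx'
  obtain ⟨v', hv', rfl⟩ := Set.mem_smul_set.1 hv
  refine ⟨_, hzC, ?_⟩
  have : x' + r • v' - (x' + y) = r • ((v' - w) - (r⁻¹ • y - w)) := by
    rw [sub_sub_sub_cancel_right, smul_sub, smul_smul, mul_inv_cancel₀ hr0.ne', one_smul]; abel
  rw [this, norm_smul, Real.norm_of_nonneg hr0.le, mul_comm]
  gcongr
  refine (norm_sub_le _ _).trans ?_
  rw [mem_ball, dist_eq_norm] at hv' hw
  linarith

lemma exists_good_point [FiniteDimensional ℝ E] [MeasurableSpace E] [BorelSpace E]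
    {f g : E → ℝ} {s : Set E} {c η r : ℝ} {x0 p0 : E} (hs : IsOpen s)
    (hf : ConvexOn ℝ s f) (hg : ConvexOn ℝ s g) (hc : 0 ≤ c) (hη : 0 < η) (hr : 0 < r)
    (hsub : closedBall x0 r ⊆ s)
    (hmax : ∀ y ∈ closedBall x0 r, f y + g y - c * ‖y‖^2 - ⟪p0, y⟫ + η * ‖y - x0‖^2 ≤
      f x0 + g x0 - c * ‖x0‖^2 - ⟪p0, x0⟫) :
    ∃ x ∈ ball x0 r, ∃ a b : E, ∃ A B : E →L[ℝ] E,
      (∀ y ∈ ball x0 r, f y + g y - c * ‖y‖^2 - ⟪a + b - (2 * c) • x, y⟫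
        ≤ f x + g x - c * ‖x‖^2 - ⟪a + b - (2 * c) • x, x⟫) ∧
      (∀ ε > 0, ∀ᶠ h in 𝓝 (0 : E),
        |f (x + h) - f x - ⟪a, h⟫ - 1/2 * ⟪A h, h⟫| ≤ ε * ‖h‖ ^ 2) ∧
      (∀ ε > 0, ∀ᶠ h in 𝓝 (0 : E),
        |g (x + h) - g x - ⟪b, h⟫ - 1/2 * ⟪B h, h⟫| ≤ ε * ‖h‖ ^ 2) := by
  set Bl := ball x0 r with hBl
  let Good : E → E → E → Prop := fun x a b => Touch f c Bl x a ∧ Touch g c Bl x b ∧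
    (∀ y ∈ Bl, f y + g y - c * ‖y‖^2 - ⟪a + b - (2 * c) • x, y⟫
        ≤ f x + g x - c * ‖x‖^2 - ⟪a + b - (2 * c) • x, x⟫)
  set C : Set E := {x | x ∈ ball x0 (r / 3) ∧ ∃ a b, Good x a b} with hC
  have hex : ∀ p ∈ ball p0 (η * (r / 3)), ∃ x ∈ ball x0 (r / 3), ∃ a b, Good x a b ∧
      p = a + b - (2 * c) • x := by
    intro p hp
    have hcont : ContinuousOn (fun y => f y + g y - c * ‖y‖^2 - ⟪p, y⟫) (closedBall x0 r) := by
      have h1 := (hf.continuousOn hs).mono hsub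
      have h2 := (hg.continuousOn hs).mono hsub
      fun_prop
    obtain ⟨x, hx, hxm⟩ := (isCompact_closedBall x0 r).exists_isMaxOn
      ⟨x0, mem_closedBall_self hr.le⟩ hcont
    have hxm' : ∀ y ∈ closedBall x0 r, f y + g y - c * ‖y‖^2 - ⟪p, y⟫ ≤
      f x + g x - c * ‖x‖^2 - ⟪p, x⟫ := hxm
    have hx3 : x ∈ ball x0 (r / 3) := by
      have h1 := hxm' x0 (mem_closedBall_self hr.le)
      have h2 := hmax x hx
      have h3 : η * ‖x - x0‖^2 ≤ ⟪p0 - p, x - x0⟫ := by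
        simp only [inner_sub_left, inner_sub_right]; linarith
      have h4 : ‖p0 - p‖ < η * (r / 3) := by rwa [mem_ball', dist_eq_norm] at hp
      have h5 := real_inner_le_norm (p0 - p) (x - x0)
      rw [mem_ball, dist_eq_norm]
      by_contra hcon
      push Not at hcon
      have h6 : 0 < ‖x - x0‖ := lt_of_lt_of_le (by positivity) hcon
      have h7 : η * ‖x - x0‖^2 < (η * (r/3)) * ‖x - x0‖ := by
        calc _ ≤ ‖p0 - p‖ * ‖x - x0‖ := h3.trans h5
          _ < _ := by gcongr
      have h8 : (η * (r/3)) * ‖x - x0‖ ≤ η * ‖x - x0‖ * ‖x - x0‖ := by gcongr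
      nlinarith
    have hxB : x ∈ Bl := ball_subset_ball (by linarith) hx3
    have hBs : Bl ⊆ s := ball_subset_closedBall.trans hsub
    obtain ⟨a, ha⟩ := exists_subgrad hs hf (hBs hxB)
    obtain ⟨b, hb⟩ := exists_subgrad hs hg (hBs hxB)
    obtain ⟨t1, t2, t3⟩ := touch_of_contact (c := c) (p := p) (isOpen_ball.mem_nhds hxB)
      (fun y hy => ha y (hBs hy)) (fun y hy => hb y (hBs hy))
      (fun y hy => hxm' y (ball_subset_closedBall hy))
    refine ⟨x, hx3, a, b, ⟨t1, t2, ?_⟩, t3⟩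
    rw [← t3]
    exact fun y hy => hxm' y (ball_subset_closedBall hy)
  have huniq : ∀ x ∈ Bl, ∀ a a' : E, ∀ f : E → ℝ, Touch f c Bl x a → Touch f c Bl x a' → a = a' := by
    intro x hx a a' f h1 h2
    have := (touch_of_contact (f := f) (g := fun y => - ⟪a', y⟫) (c := c) (a := a) (b := - a')
      (p := -(2 * c) • x)
      (isOpen_ball.mem_nhds hx) (fun y hy => (h1 y hy).1)
      (fun y hy => by simp [inner_sub_right]) (fun y hy => by
        have h3 := (h2 y hy).2
        rw [norm_sub_sq_real] at h3
        have h4 : ⟪x, x⟫ = ‖x‖^2 := real_inner_self_eq_norm_sq x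
        have h5 := real_inner_comm x y
        simp only [inner_sub_right, inner_smul_left, neg_mul, inner_neg_left] at *
        simp only [RCLike.conj_to_real, neg_smul, inner_neg_left, inner_smul_left, h4] at *
        nlinarith)).2.2
    have h := congrArg (fun z => z + (2 * c) • x) this
    simp only [neg_smul, sub_add_cancel, neg_add_cancel] at h
    rw [← sub_eq_add_neg] at h
    exact (sub_eq_zero.1 h.symm)
  have hch : ∀ x, ∃ a b, x ∈ C → Good x a b := by
    intro x
    by_cases hx : x ∈ C
    · obtain ⟨a, b, h⟩ := hx.2
      exact ⟨a, b, fun _ => h⟩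
    · exact ⟨0, 0, fun h => absurd h hx⟩
  choose α β hαβ using hch
  have hCsub : C ⊆ ball x0 (r / 3) := fun x hx => hx.1
  have hCB : C ⊆ Bl := hCsub.trans (ball_subset_ball (by linarith))
  have lα := touch_lipschitz hc hCsub (fun z hz => (hαβ z hz).1)
  have lβ := touch_lipschitz hc hCsub (fun z hz => (hαβ z hz).2.1)
  let P : E → E := fun x => α x + β x - (2 * c) • x
  have lP : ∃ K, LipschitzOnWith K P C :=
    ⟨_, (lα.add lβ).sub ((lipschitzWith_smul (2 * c)).lipschitzOnWith)⟩
  obtain ⟨K, lP⟩ := lP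
  have hPC : ball p0 (η * (r / 3)) ⊆ P '' C := by
    intro p hp
    obtain ⟨x, hx, a, b, hG, hpe⟩ := hex p hp
    have hxC : x ∈ C := ⟨hx, a, b, hG⟩
    refine ⟨x, hxC, ?_⟩
    have e1 := huniq x (hCB hxC) _ _ f (hαβ x hxC).1 hG.1
    have e2 := huniq x (hCB hxC) _ _ g (hαβ x hxC).2.1 hG.2.1
    simp only [P, e1, e2, hpe]
  let μ : Measure E := Measure.hausdorffMeasure (Module.finrank ℝ E)
  have hμC : μ C ≠ 0 := by
    intro h0
    have h1 := lP.hausdorffMeasure_image_le (d := (Module.finrank ℝ E : ℝ)) (by positivity)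
    rw [show Measure.hausdorffMeasure (Module.finrank ℝ E : ℝ) C = 0 from h0, mul_zero] at h1
    have h2 : μ (ball p0 (η * (r / 3))) ≤ 0 := (measure_mono hPC).trans h1
    exact (measure_ball_pos μ p0 (by positivity)).not_ge h2
  have hae := Besicovitch.ae_tendsto_measure_inter_div μ C
  have hda : ∀ᵐ x ∂(μ.restrict C), x ∈ C → DifferentiableWithinAt ℝ α C x :=
    ae_restrict_of_ae lα.ae_differentiableWithinAt_of_mem
  have hdb : ∀ᵐ x ∂(μ.restrict C), x ∈ C → DifferentiableWithinAt ℝ β C x :=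
    ae_restrict_of_ae lβ.ae_differentiableWithinAt_of_mem
  have hfreq : ∃ᵐ x ∂μ, x ∈ C := by
    rw [frequently_ae_iff]; exact hμC
  have hfr : ∃ᵐ x ∂(μ.restrict C), x ∈ C := by
    rw [frequently_ae_iff]
    change μ.restrict C C ≠ 0
    rwa [Measure.restrict_apply_self]
  obtain ⟨x, hxC, hx1, hx2, hx3⟩ := (hfr.and_eventually (hae.and (hda.and hdb))).exists
  have hnb : Bl ∈ 𝓝 x := isOpen_ball.mem_nhds (hCB hxC)
  refine ⟨x, hCB hxC, α x, β x, fderivWithin ℝ α C x, fderivWithin ℝ β C x, (hαβ x hxC).2.2, ?_, ?_⟩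
  · intro ε hε
    exact expand hc hnb (fun z hz => (hαβ z hz).1) (fun e he => net_of_density μ hx1 he)
      (hx2 hxC).hasFDerivWithinAt hε
  · intro ε hε
    exact expand hc hnb (fun z hz => (hαβ z hz).2.1) (fun e he => net_of_density μ hx1 he)
      (hx3 hxC).hasFDerivWithinAt hε

end helpers

abbrev matT {n : ℕ} (M : SymMat n) : Euc n →L[ℝ] Euc n :=
  Matrix.toEuclideanCLM (𝕜 := ℝ) (M : Matrix (Fin n) (Fin n) ℝ)

lemma matT_add {n : ℕ} (M N : SymMat n) : matT (M + N) = matT M + matT N := by simp [matT]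
lemma matT_neg {n : ℕ} (M : SymMat n) : matT (-M) = - matT M := by simp [matT]
lemma matT_smul_one {n : ℕ} (t : ℝ) : matT (t • symOne n) = t • (1 : Euc n →L[ℝ] Euc n) := by
  simp [matT, symOne]

lemma matT_symm {n : ℕ} (M : SymMat n) (x y : Euc n) : ⟪matT M x, y⟫ = ⟪x, matT M y⟫ := by
  have h : IsSelfAdjoint (matT M) := by
    have := selfAdjoint.mem_iff.1 M.2
    rw [isSelfAdjoint_iff, matT, ← map_star, this]
  exact (ContinuousLinearMap.isSelfAdjoint_iff_isSymmetric.1 h) x y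

lemma exists_matT {n : ℕ} (A : Euc n →L[ℝ] Euc n) :
    ∃ M : SymMat n, ∀ h, ⟪matT M h, h⟫ = ⟪A h, h⟫ := by
  let e := Matrix.toEuclideanCLM (n := Fin n) (𝕜 := ℝ)
  let M0 : Matrix (Fin n) (Fin n) ℝ := e.symm A
  have hM0 : e M0 = A := e.apply_symm_apply A
  have hsa : star ((1/2 : ℝ) • (M0 + star M0)) = (1/2 : ℝ) • (M0 + star M0) := by
    rw [star_smul, star_add, star_star, star_trivial, add_comm]
  refine ⟨⟨(1/2 : ℝ) • (M0 + star M0), selfAdjoint.mem_iff.2 hsa⟩, fun h => ?_⟩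
  have : matT (⟨(1/2 : ℝ) • (M0 + star M0), selfAdjoint.mem_iff.2 hsa⟩ : SymMat n)
      = (1/2 : ℝ) • (A + star A) := by
    change e ((1/2 : ℝ) • (M0 + star M0)) = _
    rw [map_smul, map_add, map_star, hM0]
  rw [this, ContinuousLinearMap.star_eq_adjoint]
  change ⟪(1/2 : ℝ) • (A h + ContinuousLinearMap.adjoint A h), h⟫ = _
  rw [real_inner_smul_left, inner_add_left, ContinuousLinearMap.adjoint_inner_left,
    real_inner_comm (A h) h]
  ring

lemma fderiv_quad {E : Type*} [NormedAddCommGroup E] [InnerProductSpace ℝ E] (T : E →L[ℝ] E)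
    (hT : ∀ x y, ⟪T x, y⟫ = ⟪x, T y⟫) (x y : E) :
    HasFDerivAt (fun y => 1/2 * ⟪T (y - x), y - x⟫) (innerSL ℝ (T (y - x))) y := by
  have hs : HasFDerivAt (fun y : E => y - x) (ContinuousLinearMap.id ℝ E) y :=
    (hasFDerivAt_id y).sub_const x
  have hT' : HasFDerivAt (fun y : E => T (y - x)) T y := T.hasFDerivAt.comp y hs
  refine ((hT'.inner ℝ hs).const_mul (1/2 : ℝ)).congr_fderiv ?_
  ext v
  have h := hT v (y - x)
  simp only [ContinuousLinearMap.coe_comp', smul_apply, Function.comp_apply,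
    ContinuousLinearMap.prod_apply, fderivInnerCLM_apply, innerSL_apply_apply, smul_eq_mul,
    ContinuousLinearMap.id_apply, h, real_inner_comm v]
  ring

lemma fderiv_quad2 {E : Type*} [NormedAddCommGroup E] [InnerProductSpace ℝ E] (T : E →L[ℝ] E)
    (x y : E) :
    HasFDerivAt (fun y => innerSL ℝ (T (y - x))) ((innerSL ℝ).comp T) y := by
  have hs : HasFDerivAt (fun y : E => y - x) (ContinuousLinearMap.id ℝ E) y :=
    (hasFDerivAt_id y).sub_const x
  exact ((innerSL ℝ).comp T).hasFDerivAt.comp y hs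

lemma hess_quad {n : ℕ} (M : SymMat n) (x y : Euc n) :
    hessMat (fun y => 1/2 * ⟪matT M (y - x), y - x⟫) y = M := by
  have h2 : fderiv ℝ (fun y => 1/2 * ⟪matT M (y - x), y - x⟫) =
      fun y => innerSL ℝ (matT M (y - x)) := funext fun y =>
      (fderiv_quad (matT M) (matT_symm M) x y).fderiv
  have h3 := fderiv_quad2 (matT M) x y
  ext i j
  rw [hessMat, iteratedFDeriv_two_apply, h2, h3.fderiv]
  simp only [ContinuousLinearMap.comp_apply, Matrix.cons_val_zero, Matrix.cons_val_one,
    innerSL_apply_apply]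
  have hM : (M : Matrix (Fin n) (Fin n) ℝ) j i = (M : Matrix (Fin n) (Fin n) ℝ) i j := by
    have := selfAdjoint.mem_iff.1 M.2
    conv_rhs => rw [← this]
    simp [Matrix.star_apply]
  rw [← hM, EuclideanSpace.inner_single_right]
  simp [matT]

lemma contDiff_quad {n : ℕ} (M : SymMat n) (x : Euc n) :
    ContDiff ℝ 2 (fun y => 1/2 * ⟪matT M (y - x), y - x⟫) := by
  have h1 : ContDiff ℝ 2 (fun y : Euc n => matT M (y - x)) :=
    (matT M).contDiff.comp (contDiff_id.sub contDiff_const)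
  exact contDiff_const.mul (h1.inner ℝ (contDiff_id.sub contDiff_const))

lemma mem_of_expansion {n : ℕ} {G : Set (SymMat n)} (hG : IsClosed G) {X : Set (Euc n)}
    (hX : IsOpen X) {u : Euc n → ℝ} (hu : IsTypeF G X (fun x => (u x : EReal))) {x : Euc n}
    (hx : x ∈ X) {M : SymMat n} {p : Euc n}
    (h : ∀ ε > 0, ∀ᶠ h in 𝓝 (0 : Euc n),
      u (x + h) ≤ u x + ⟪p, h⟫ + 1/2 * ⟪matT M h, h⟫ + ε * ‖h‖^2) : M ∈ G := by
  have key : ∀ ε : ℝ, 0 < ε → M + ε • symOne n ∈ G := by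
    intro ε hε
    by_contra hN
    set N := M + ε • symOne n with hNdef
    have hNq : ∀ h, ⟪matT N h, h⟫ = ⟪matT M h, h⟫ + ε * ‖h‖^2 := by
      intro h
      rw [hNdef, matT_add, matT_smul_one]
      simp [inner_add_left, inner_smul_left]
    have hsub := hu (fun y => 1/2 * ⟪matT (-N) (y - x), y - x⟫)
      ⟨(contDiff_quad _ _).contDiffOn, fun y _ => ⟨-N, by
        change - -N ∉ interior G
        rw [neg_neg]; exact fun hh => hN (interior_subset hh), (hess_quad (-N) x y).symm⟩⟩
    obtain ⟨ρ1, hρ1, h1⟩ := Metric.eventually_nhds_iff.1 (h (ε/4) (by positivity))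
    obtain ⟨ρ2, hρ2, h2⟩ := Metric.isOpen_iff.1 hX x hx
    set ρ := min ρ1 ρ2 / 2 with hρ
    have hm : 0 < min ρ1 ρ2 := lt_min hρ1 hρ2
    have hρ0 : 0 < ρ := by positivity
    have l1 : ρ < ρ1 := by have := min_le_left ρ1 ρ2; linarith
    have l2 : ρ < ρ2 := by have := min_le_right ρ1 ρ2; linarith
    let a : Euc n →ᵃ[ℝ] ℝ := (innerSL ℝ p).toLinearMap.toAffineMap +
      AffineMap.const ℝ (Euc n) (u x - ⟪p, x⟫ - ε/4 * ρ^2)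
    have ha : ∀ y, a y = ⟪p, y⟫ + (u x - ⟪p, x⟫ - ε/4 * ρ^2) := fun y => by simp [a]
    have := hsub (closedBall x ρ) (isCompact_closedBall x ρ)
      ((closedBall_subset_ball l2).trans h2) a (fun y hy => by
        have hy' : ‖y - x‖ = ρ := by
          have := frontier_closedBall_subset_sphere hy
          simpa [dist_eq_norm] using this
        have h3 := h1 (y := y - x) (by rw [dist_zero_right, hy']; exact l1)
        rw [add_sub_cancel, hy'] at h3
        have h4 := hNq (y - x)
        rw [hy'] at h4
        beta_reduce
        rw [← EReal.coe_add, EReal.coe_le_coe_iff, ha, matT_neg]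
        rw [inner_sub_right] at h3
        rw [_root_.neg_apply, inner_neg_left, h4]
        linarith) x (mem_closedBall_self hρ0.le)
    beta_reduce at this
    rw [← EReal.coe_add, EReal.coe_le_coe_iff, ha] at this
    simp only [sub_self, map_zero, inner_zero_left] at this
    have : 0 < ε/4 * ρ^2 := by positivity
    linarith
  have ht : Tendsto (fun ε : ℝ => M + ε • symOne n) (𝓝[>] 0) (𝓝 M) := by
    have : Continuous (fun ε : ℝ => M + ε • symOne n) := by
      refine continuous_induced_rng.2 ?_
      change Continuous (fun ε : ℝ => (M : Matrix (Fin n) (Fin n) ℝ) +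
        ε • (symOne n : Matrix (Fin n) (Fin n) ℝ))
      fun_prop
    have h := this.tendsto 0
    simp only [zero_smul, add_zero] at h
    exact h.mono_left nhdsWithin_le_nhds
  exact hG.mem_of_tendsto ht (by filter_upwards [self_mem_nhdsWithin] with ε hε using key ε hε)

lemma mem_interior_of {n : ℕ} {F : Set (SymMat n)} (hF : IsDirichletSet F) {M S : SymMat n}
    (hM : M ∈ F) {η : ℝ} (hη : 0 < η) (h : ∀ v, ⟪matT M v, v⟫ + η * ‖v‖^2 ≤ ⟪matT S v, v⟫) :
    S ∈ interior F := by
  have hc : Continuous (fun R : SymMat n => matT R) := by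
    have : Continuous (Matrix.toEuclideanCLM (n := Fin n) (𝕜 := ℝ)).toAlgEquiv.toLinearMap :=
      LinearMap.continuous_of_finiteDimensional _
    exact this.comp continuous_subtype_val
  rw [mem_interior_iff_mem_nhds]
  have hev : ∀ᶠ R in 𝓝 S, ‖matT R - matT S‖ < η := by
    have := hc.tendsto S
    have := (Metric.tendsto_nhds.1 this) η hη
    simpa [dist_eq_norm] using this
  filter_upwards [hev] with R hR
  have : R = M + (R - M) := by abel
  rw [this]
  refine hF.add_psd M hM _ ?_
  rw [← Matrix.isPositive_toEuclideanLin_iff]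
  refine ⟨?_, fun v => ?_⟩
  · intro v w
    exact matT_symm (R - M) v w
  · change 0 ≤ ⟪matT (R - M) v, v⟫
    have h1 : |⟪(matT R - matT S) v, v⟫| ≤ η * ‖v‖^2 := by
      refine (abs_real_inner_le_norm _ _).trans ?_
      calc _ ≤ (η * ‖v‖) * ‖v‖ := by
            gcongr; exact (ContinuousLinearMap.le_opNorm _ _).trans (by gcongr)
        _ = _ := by ring
    have h2 := neg_abs_le ⟪(matT R - matT S) v, v⟫
    rw [_root_.sub_apply, inner_sub_left] at h1 h2
    have h3 := h v
    rw [sub_eq_add_neg R M, matT_add, matT_neg, _root_.add_apply,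
      _root_.neg_apply, inner_add_left, inner_neg_left]
    linarith

/-- Corollary 7.4, the Subaffine Theorem for quasiconvex functions. -/
theorem subaffine_theorem_quasiconvex {n : ℕ} (F : Set (SymMat n)) (hF : IsDirichletSet F)
    (X : Set (Euc n)) (hX : IsOpen X) (lam : ℝ) (hlam : 0 < lam) (u v : Euc n → ℝ)
    (hu_qc : ∀ x ∈ X, ∃ B, IsOpen B ∧ Convex ℝ B ∧ x ∈ B ∧ B ⊆ X ∧
        ConvexOn ℝ B (fun y => u y + lam * (1/2 * ‖y‖ ^ 2)))
    (hv_qc : ∀ x ∈ X, ∃ B, IsOpen B ∧ Convex ℝ B ∧ x ∈ B ∧ B ⊆ X ∧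
        ConvexOn ℝ B (fun y => v y + lam * (1/2 * ‖y‖ ^ 2)))
    (hu : IsTypeF F X (fun x => (u x : EReal)))
    (hv : IsTypeF (dirDual F) X (fun x => (v x : EReal))) :
    SubaffineOn X (fun x => ((u x + v x : ℝ) : EReal)) := by
  intro K hK hKX a ha x1 hx1
  rw [EReal.coe_le_coe_iff]
  by_contra hcon
  push Not at hcon
  have hcu : ContinuousOn u X := by
    intro x hx
    obtain ⟨B, hBo, -, hxB, -, hcv⟩ := hu_qc x hx
    have h1 := (hcv.continuousOn hBo).continuousAt (hBo.mem_nhds hxB)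
    have h2 : ContinuousAt (fun y : Euc n => lam * (1/2 * ‖y‖ ^ 2)) x := by fun_prop
    have h3 := h1.sub h2
    refine (h3.congr (Eventually.of_forall fun y => ?_)).continuousWithinAt
    simp
  have hcv : ContinuousOn v X := by
    intro x hx
    obtain ⟨B, hBo, -, hxB, -, hcv⟩ := hv_qc x hx
    have h1 := (hcv.continuousOn hBo).continuousAt (hBo.mem_nhds hxB)
    have h2 : ContinuousAt (fun y : Euc n => lam * (1/2 * ‖y‖ ^ 2)) x := by fun_prop
    have h3 := h1.sub h2
    refine (h3.congr (Eventually.of_forall fun y => ?_)).continuousWithinAt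
    simp
  obtain ⟨q, hq⟩ : ∃ q : Euc n, ∀ y, a y = ⟪q, y⟫ + a 0 := by
    refine ⟨(InnerProductSpace.toDual ℝ (Euc n)).symm (LinearMap.toContinuousLinearMap a.linear),
      fun y => ?_⟩
    rw [InnerProductSpace.toDual_symm_apply]
    have := a.map_vadd 0 y
    simpa using this
  obtain ⟨R, hR⟩ := hK.isBounded.exists_norm_le
  set w1 := u x1 + v x1 - a x1 with hw1
  have hw1p : 0 < w1 := by rw [hw1]; linarith
  set η := min (lam / 2) (w1 / (4 * (R^2 + 1))) with hη
  have hη0 : 0 < η := lt_min (by positivity) (by positivity)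
  have hηl : η ≤ lam / 2 := min_le_left _ _
  have hηR : 2 * η * R^2 < w1 := by
    have h1 : η ≤ w1 / (4 * (R^2 + 1)) := min_le_right _ _
    rw [le_div_iff₀ (by positivity)] at h1
    nlinarith [sq_nonneg R]
  have hΦc : ContinuousOn (fun y => u y + v y - (⟪q, y⟫ + a 0) + 2 * η * ‖y‖^2) K := by
    have h1 := hcu.mono hKX
    have h2 := hcv.mono hKX
    fun_prop
  obtain ⟨x0, hx0K, hx0m⟩ := hK.exists_isMaxOn ⟨x1, hx1⟩ hΦc
  have hx0m' : ∀ y ∈ K, u y + v y - (⟪q, y⟫ + a 0) + 2 * η * ‖y‖^2 ≤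
    u x0 + v x0 - (⟪q, x0⟫ + a 0) + 2 * η * ‖x0‖^2 := hx0m
  have hx0i : x0 ∈ interior K := by
    by_contra hni
    have hfr : x0 ∈ frontier K := ⟨subset_closure hx0K, hni⟩
    have h1 := ha x0 hfr
    rw [EReal.coe_le_coe_iff, hq] at h1
    have h2 := hx0m' x1 hx1
    have h3 : ‖x0‖^2 ≤ R^2 := by
      have := hR x0 hx0K
      gcongr
    have h4 : 2 * η * ‖x0‖^2 ≤ 2 * η * R^2 := by gcongr
    have h5 : 0 ≤ 2 * η * ‖x1‖^2 := by positivity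
    rw [hq] at hw1
    linarith
  have hx0X : x0 ∈ X := hKX hx0K
  obtain ⟨Bu, hBuo, hBuc, hxBu, hBuX, hfu⟩ := hu_qc x0 hx0X
  obtain ⟨Bv, hBvo, hBvc, hxBv, hBvX, hgv⟩ := hv_qc x0 hx0X
  set f := fun y => u y + lam * (1/2 * ‖y‖ ^ 2) with hf
  set g := fun y => v y + lam * (1/2 * ‖y‖ ^ 2) with hg
  have hso : IsOpen (Bu ∩ Bv) := hBuo.inter hBvo
  have hsc : Convex ℝ (Bu ∩ Bv) := hBuc.inter hBvc
  have hfs := hfu.subset inter_subset_left hsc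
  have hgs := hgv.subset inter_subset_right hsc
  obtain ⟨r, hr, hrs⟩ := Metric.nhds_basis_closedBall.mem_iff.1
    ((hso.inter isOpen_interior).mem_nhds ⟨⟨hxBu, hxBv⟩, hx0i⟩)
  have hmax : ∀ y ∈ closedBall x0 r, f y + g y - (lam - η) * ‖y‖^2 - ⟪q - (2 * η) • x0, y⟫
      + η * ‖y - x0‖^2 ≤
      f x0 + g x0 - (lam - η) * ‖x0‖^2 - ⟪q - (2 * η) • x0, x0⟫ := by
    intro y hy
    have h1 := hx0m' y (interior_subset (hrs hy).2)
    rw [norm_sub_sq_real, real_inner_comm x0 y, inner_sub_left, inner_sub_left, real_inner_smul_left,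
      real_inner_smul_left, real_inner_self_eq_norm_sq]
    simp only [hf, hg]
    linarith
  obtain ⟨x, hxr, p1, p2, A, B, hxmax, hAe, hBe⟩ := exists_good_point hso hfs hgs
    (c := lam - η) (by linarith) hη0 hr (hrs.trans inter_subset_left) hmax
  have hxX : x ∈ X := hBuX (hrs (ball_subset_closedBall hxr)).1.1
  obtain ⟨M, hM⟩ := exists_matT (A - lam • (1 : Euc n →L[ℝ] Euc n))
  obtain ⟨N, hN⟩ := exists_matT (B - lam • (1 : Euc n →L[ℝ] Euc n))
  have hM' : ∀ h, ⟪matT M h, h⟫ = ⟪A h, h⟫ - lam * ‖h‖^2 := by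
    intro h
    rw [hM]
    change ⟪A h - lam • h, h⟫ = _
    rw [inner_sub_left, real_inner_smul_left, real_inner_self_eq_norm_sq]
  have hN' : ∀ h, ⟪matT N h, h⟫ = ⟪B h, h⟫ - lam * ‖h‖^2 := by
    intro h
    rw [hN]
    change ⟪B h - lam • h, h⟫ = _
    rw [inner_sub_left, real_inner_smul_left, real_inner_self_eq_norm_sq]
  have hMF : M ∈ F := by
    refine mem_of_expansion hF.isClosed hX hu hxX (p := p1 - lam • x) fun ε hε => ?_
    filter_upwards [hAe ε hε] with h hh
    have h1 := (abs_le.1 hh).2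
    simp only [hf] at h1
    rw [norm_add_sq_real] at h1
    rw [hM', inner_sub_left, real_inner_smul_left]
    linarith
  have hNF : N ∈ dirDual F := by
    have hcl : IsClosed (dirDual F) := by
      have : IsOpen ((fun A : SymMat n => -A) ⁻¹' interior F) :=
        isOpen_interior.preimage continuous_neg
      exact this.isClosed_compl
    refine mem_of_expansion hcl hX hv hxX (p := p2 - lam • x) fun ε hε => ?_
    filter_upwards [hBe ε hε] with h hh
    have h1 := (abs_le.1 hh).2
    simp only [hg] at h1
    rw [norm_add_sq_real] at h1
    rw [hN', inner_sub_left, real_inner_smul_left]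
    linarith
  refine hNF (mem_interior_of hF hMF hη0 fun z => ?_)
  rw [matT_neg, _root_.neg_apply, inner_neg_left, hM', hN']
  have hev : ∀ᶠ h in 𝓝 (0 : Euc n), ⟪A h, h⟫ + ⟪B h, h⟫ ≤ (2 * lam - η) * ‖h‖^2 := by
    have hb : ∀ᶠ h in 𝓝 (0 : Euc n), x + h ∈ ball x0 r := by
      have : ContinuousAt (fun h : Euc n => x + h) 0 := by fun_prop
      exact this (by simpa using isOpen_ball.mem_nhds hxr)
    filter_upwards [hb, hAe (η/4) (by positivity), hBe (η/4) (by positivity)] with h h1 h2 h3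
    have h2 := (abs_le.1 h2).1
    have h3 := (abs_le.1 h3).1
    have h4 := hxmax _ h1
    rw [norm_add_sq_real, inner_add_right, inner_sub_left _ _ h, inner_add_left p1 p2 h,
      real_inner_smul_left] at h4
    linarith
  have ht : Tendsto (fun t : ℝ => t • z) (𝓝[>] 0) (𝓝 0) := by
    have : ContinuousAt (fun t : ℝ => t • z) 0 := by fun_prop
    have h := this.tendsto
    simp only [zero_smul] at h
    exact h.mono_left nhdsWithin_le_nhds
  obtain ⟨t, ht1, ht0⟩ := ((ht.eventually hev).and self_mem_nhdsWithin).exists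
  have ht0 : (0:ℝ) < t := ht0
  rw [map_smul, map_smul, real_inner_smul_left, real_inner_smul_left, inner_smul_right,
    inner_smul_right, norm_smul, Real.norm_of_nonneg ht0.le] at ht1
  have h5 : t^2 * (⟪A z, z⟫ + ⟪B z, z⟫) ≤ t^2 * ((2 * lam - η) * ‖z‖^2) := by linarith
  have h6 := le_of_mul_le_mul_left h5 (by positivity)
  linarith
end
end

section
/- Let F ⊂ Sym²(ℝⁿ) be a Dirichlet set, X ⊂ ℝⁿ open, and u : X → ℝ locally quasiconvex. If for Lebesgue-almost every x ∈ X the function u is twice differentiable at x with Hess_x u ∈ F, then u is of type F on X. -/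
open Set Metric Filter MeasureTheory Asymptotics
open scoped Topology BigOperators RealInnerProductSpace

noncomputable section

lemma aux_convex {E : Type*} [NormedAddCommGroup E] [NormedSpace ℝ E] {B : Set E} (hB : IsOpen B)
    {f : E → ℝ} (hf : ConvexOn ℝ B f) {x : E} (hx : x ∈ B) (l : E →L[ℝ] ℝ) (M : ℝ)
    (h : ∀ y ∈ B, f y ≤ f x + l (y - x) + M * ‖y - x‖ ^ 2) :
    ∀ y ∈ B, f x + l (y - x) ≤ f y := by
  intro y hy
  have hc : ContinuousAt (fun t : ℝ => x - t • (y - x)) 0 := by fun_prop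
  have hev : ∀ᶠ t : ℝ in 𝓝[>] 0, x - t • (y - x) ∈ B := by
    apply mem_nhdsWithin_of_mem_nhds
    apply hc
    simpa using hB.mem_nhds hx
  have hlim : Tendsto (fun t : ℝ => f y + t * (M * ‖y - x‖ ^ 2)) (𝓝[>] 0) (𝓝 (f y)) := by
    apply tendsto_nhdsWithin_of_tendsto_nhds
    have : ContinuousAt (fun t : ℝ => f y + t * (M * ‖y - x‖ ^ 2)) 0 := by fun_prop
    simpa [ContinuousAt] using this
  refine ge_of_tendsto hlim ?_
  filter_upwards [hev, self_mem_nhdsWithin] with t ht htpos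
  have htpos : 0 < t := htpos
  have h1 := h _ ht
  have h2 := hf.2 hy ht (show 0 ≤ t / (1 + t) by positivity) (show 0 ≤ 1 / (1 + t) by positivity)
    (by field_simp; ring)
  have e : (t / (1 + t)) • y + (1 / (1 + t)) • (x - t • (y - x)) = x := by
    have : (1 + t) ≠ 0 := by positivity
    have e1 : (t / (1 + t)) • y + (1 / (1 + t)) • (x - t • (y - x))
      = (t / (1 + t) - 1 / (1 + t) * t) • y + (1 / (1 + t) * (1 + t)) • x := by module
    rw [e1]
    have : t / (1 + t) - 1 / (1 + t) * t = 0 := by ring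
    rw [this]
    field_simp
    simp
  rw [e] at h2
  have e2 : x - t • (y - x) - x = -(t • (y - x)) := by abel
  rw [e2, norm_neg, norm_smul, map_neg, map_smul, mul_pow, Real.norm_eq_abs, sq_abs] at h1
  simp only [smul_eq_mul] at h1 h2
  have h3 : f x * (1 + t) ≤ t * f y + f (x - t • (y - x)) := by
    have := mul_le_mul_of_nonneg_right h2 (by positivity : 0 ≤ 1 + t)
    have e4 : (t / (1 + t) * f y + 1 / (1 + t) * f (x - t • (y - x))) * (1 + t)
      = t * f y + f (x - t • (y - x)) := by field_simp
    linarith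
  have h4 : t * (f x + l (y - x)) ≤ t * (f y + t * (M * ‖y - x‖ ^ 2)) := by nlinarith
  exact le_of_mul_le_mul_left h4 htpos

lemma aux_semiconvex {n : ℕ} {B : Set (Euc n)} (hB : IsOpen B) {u s : Euc n → ℝ} {lam L : ℝ}
    (hf : ConvexOn ℝ B (fun y => u y + lam * (1/2 * ‖y‖ ^ 2)))
    (s' : Euc n → (Euc n →L[ℝ] ℝ))
    (hs : ∀ x ∈ B, ∀ y ∈ B, |s y - s x - s' x (y - x)| ≤ L * ‖y - x‖ ^ 2)
    {x p : Euc n} (hx : x ∈ B)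
    (h : ∀ y ∈ B, u y + s y ≤ u x + s x + ⟪p, y - x⟫) :
    ∀ y ∈ B, u x + s x + ⟪p, y - x⟫ - (L + lam / 2) * ‖y - x‖ ^ 2 ≤ u y + s y := by
  have key : ∀ y : Euc n, ‖y‖ ^ 2 = ‖x‖ ^ 2 + 2 * ⟪x, y - x⟫ + ‖y - x‖ ^ 2 := by
    intro y
    have := norm_add_sq_real x (y - x)
    rwa [add_sub_cancel] at this
  have := aux_convex hB hf hx (innerSL ℝ p - s' x + lam • innerSL ℝ x) (L + lam / 2) ?_
  · intro y hy
    have h1 := this y hy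
    have h2 := abs_le.1 (hs x hx y hy)
    have h3 := key y
    simp only [add_apply, sub_apply, smul_apply, innerSL_apply_apply, smul_eq_mul] at h1
    rw [h3] at h1
    linarith
  · intro y hy
    have h1 := h y hy
    have h2 := abs_le.1 (hs x hx y hy)
    have h3 := key y
    simp only [add_apply, sub_apply, smul_apply, innerSL_apply_apply, smul_eq_mul]
    rw [h3]
    linarith

lemma aux_lip {n : ℕ} {g : Euc n → ℝ} {z : Euc n} {R C : ℝ} (hR : 0 < R) (hC : 0 ≤ C)
    (hsc : ∀ x ∈ ball z R, ∀ p : Euc n, (∀ y ∈ ball z R, g y ≤ g x + ⟪p, y - x⟫) →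
      ∀ y ∈ ball z R, g x + ⟪p, y - x⟫ - C * ‖y - x‖ ^ 2 ≤ g y)
    {x₁ x₂ p₁ p₂ : Euc n} (h₁ : x₁ ∈ closedBall z (R/8)) (h₂ : x₂ ∈ closedBall z (R/8))
    (c₁ : ∀ y ∈ ball z R, g y ≤ g x₁ + ⟪p₁, y - x₁⟫)
    (c₂ : ∀ y ∈ ball z R, g y ≤ g x₂ + ⟪p₂, y - x₂⟫) :
    ‖p₁ - p₂‖ ≤ 4 * C * ‖x₁ - x₂‖ := by
  have h₁' : x₁ ∈ ball z R := closedBall_subset_ball (by linarith) h₁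
  have h₂' : x₂ ∈ ball z R := closedBall_subset_ball (by linarith) h₂
  by_cases hp : p₁ = p₂
  · subst hp; simp; positivity
  have hp' : 0 < ‖p₁ - p₂‖ := norm_pos_iff.2 (sub_ne_zero.2 hp)
  have hr : ‖x₁ - x₂‖ < R / 2 := by
    have := dist_triangle_right x₁ x₂ z
    rw [mem_closedBall] at h₁ h₂
    rw [← dist_eq_norm]; linarith
  have main : ∀ s : ℝ, ‖x₁ - x₂‖ < s → s < R / 2 → ‖p₁ - p₂‖ ≤ 4 * C * s := by
    intro s hs1 hs2
    have hs0 : 0 < s := (norm_nonneg _).trans_lt hs1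
    set y := x₂ + (s / ‖p₁ - p₂‖) • (p₁ - p₂) with hy
    have hy2 : y - x₂ = (s / ‖p₁ - p₂‖) • (p₁ - p₂) := by simp [hy]
    have hyn : ‖y - x₂‖ = s := by
      rw [hy2, norm_smul, Real.norm_eq_abs, abs_of_pos (by positivity)]
      field_simp
    have hyB : y ∈ ball z R := by
      rw [mem_ball]
      have := dist_triangle y x₂ z
      rw [mem_closedBall] at h₂
      rw [dist_eq_norm y x₂] at this
      linarith
    have hy1 : ‖y - x₁‖ ≤ 2 * s := by
      have := dist_triangle y x₂ x₁
      rw [dist_eq_norm, dist_eq_norm, dist_comm, dist_eq_norm] at this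
      linarith
    have e1 := hsc x₁ h₁' p₁ c₁ y hyB
    have e2 := c₂ y hyB
    have e3 := c₁ x₂ h₂'
    have e4 : ⟪p₁, y - x₁⟫ = ⟪p₁, y - x₂⟫ + ⟪p₁, x₂ - x₁⟫ := by
      rw [← inner_add_right]; congr 1; abel
    have e5 : ⟪p₁, y - x₂⟫ - ⟪p₂, y - x₂⟫ = s * ‖p₁ - p₂‖ := by
      rw [← inner_sub_left, hy2, inner_smul_right, real_inner_self_eq_norm_sq]
      field_simp
    have e6 : ‖y - x₁‖ ^ 2 ≤ (2 * s) ^ 2 := by gcongr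
    have e7 : C * ‖y - x₁‖ ^ 2 ≤ C * (2 * s) ^ 2 := by gcongr
    have e8 : s * ‖p₁ - p₂‖ ≤ s * (4 * C * s) := by nlinarith
    exact le_of_mul_le_mul_left e8 hs0
  have hlim : Tendsto (fun s : ℝ => 4 * C * s) (𝓝[>] ‖x₁ - x₂‖) (𝓝 (4 * C * ‖x₁ - x₂‖)) := by
    apply tendsto_nhdsWithin_of_tendsto_nhds
    have : Continuous (fun s : ℝ => 4 * C * s) := by fun_prop
    exact this.tendsto _
  refine ge_of_tendsto hlim ?_
  filter_upwards [Ioo_mem_nhdsGT hr] with s hs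
  exact main s hs.1 hs.2

lemma aux_null {n : ℕ} {E : Set (Euc n)} (hE : volume E = 0) {G : Euc n → Euc n} {K : NNReal}
    (hG : LipschitzOnWith K G E) : volume (G '' E) = 0 := by
  have h1 : (μH[(Module.finrank ℝ (Euc n) : ℝ)] : Measure (Euc n)) ≪ volume :=
    Measure.absolutelyContinuous_isAddHaarMeasure _ _
  have h2 : (volume : Measure (Euc n)) ≪ μH[(Module.finrank ℝ (Euc n) : ℝ)] :=
    Measure.absolutelyContinuous_isAddHaarMeasure _ _
  apply h2
  have := hG.hausdorffMeasure_image_le (d := (Module.finrank ℝ (Euc n) : ℝ)) (by positivity)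
  rw [h1 hE, mul_zero] at this
  exact le_antisymm this bot_le

lemma aux_jensen {n : ℕ} {g : Euc n → ℝ} {z : Euc n} {R C c : ℝ} (hR : 0 < R) (hC : 0 ≤ C)
    (hc : 0 < c) (hcont : ContinuousOn g (ball z R))
    (hsc : ∀ x ∈ ball z R, ∀ p : Euc n, (∀ y ∈ ball z R, g y ≤ g x + ⟪p, y - x⟫) →
      ∀ y ∈ ball z R, g x + ⟪p, y - x⟫ - C * ‖y - x‖ ^ 2 ≤ g y)
    (hmax : ∀ y ∈ ball z R, g y ≤ g z - c * ‖y - z‖ ^ 2) :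
    volume {x | x ∈ closedBall z (R/8) ∧ ∃ p : Euc n, ∀ y ∈ ball z R, g y ≤ g x + ⟪p, y - x⟫} ≠ 0 := by
  intro hE
  set E := {x | x ∈ closedBall z (R/8) ∧ ∃ p : Euc n, ∀ y ∈ ball z R, g y ≤ g x + ⟪p, y - x⟫} with hEd
  have hch : ∀ x : Euc n, ∃ p : Euc n, x ∈ E → ∀ y ∈ ball z R, g y ≤ g x + ⟪p, y - x⟫ := by
    intro x
    by_cases hx : x ∈ E
    · obtain ⟨p, hp⟩ := hx.2
      exact ⟨p, fun _ => hp⟩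
    · exact ⟨0, fun h => absurd h hx⟩
  choose G hG using hch
  have hLip : LipschitzOnWith (Real.toNNReal (4 * C)) G E := by
    refine LipschitzOnWith.of_dist_le_mul fun x hx y hy => ?_
    rw [Real.coe_toNNReal _ (by positivity), dist_eq_norm, dist_eq_norm]
    exact aux_lip hR hC hsc hx.1 hy.1 (hG x hx) (hG y hy)
  have hnull := aux_null hE hLip
  have hsub : ball (0 : Euc n) (c * (R / 8)) ⊆ G '' E := by
    intro p hp
    have hp : ‖p‖ < c * (R / 8) := by simpa using hp
    have hsubB : closedBall z (R/8) ⊆ ball z R := closedBall_subset_ball (by linarith)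
    obtain ⟨x, hx, hxm⟩ := (isCompact_closedBall z (R/8)).exists_isMaxOn
      ⟨z, mem_closedBall_self (by positivity)⟩
      (f := fun y => g y - ⟪p, y⟫) ((hcont.mono hsubB).sub (by fun_prop))
    have hcx : ∀ y ∈ ball z R, g y ≤ g x + ⟪p, y - x⟫ := by
      intro y hy
      rw [inner_sub_right]
      by_cases hy' : y ∈ closedBall z (R/8)
      · have : g y - ⟪p, y⟫ ≤ g x - ⟪p, x⟫ := hxm hy'
        linarith
      · have hz : g z - ⟪p, z⟫ ≤ g x - ⟪p, x⟫ := hxm (mem_closedBall_self (by positivity))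
        have hm := hmax y hy
        rw [mem_closedBall, not_le, dist_eq_norm] at hy'
        have h1 := real_inner_le_norm (-p) (y - z)
        rw [inner_neg_left, inner_sub_right, norm_neg] at h1
        have h2 : ‖p‖ * ‖y - z‖ ≤ c * ‖y - z‖ ^ 2 := by
          have : ‖p‖ ≤ c * ‖y - z‖ := hp.le.trans (by gcongr)
          nlinarith [norm_nonneg (y - z)]
        linarith
    have hxE : x ∈ E := ⟨hx, p, hcx⟩
    refine ⟨x, hxE, ?_⟩
    have := aux_lip hR hC hsc hx hx (hG x hxE) hcx
    rw [sub_self, norm_zero, mul_zero] at this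
    exact sub_eq_zero.1 (norm_le_zero_iff.1 this)
  have := measure_mono_null hsub hnull
  exact (measure_ball_pos volume (0 : Euc n) (by positivity : 0 < c * (R / 8))).ne' this

lemma aux_smooth {n : ℕ} {s : Euc n → ℝ} {z : Euc n} (hs : ContDiffAt ℝ 2 s z) :
    ∃ L : ℝ, 0 ≤ L ∧ ∃ r > 0, ∀ x ∈ ball z r, ∀ y ∈ ball z r,
      |s y - s x - fderiv ℝ s x (y - x)| ≤ L * ‖y - x‖ ^ 2 := by
  have h1 : ContDiffAt ℝ 1 (fderiv ℝ s) z := hs.fderiv_right (by norm_num)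
  obtain ⟨K, t, ht, hK⟩ := h1.exists_lipschitzOnWith
  have h2 : ∀ᶠ y in 𝓝 z, ContDiffAt ℝ 2 s y := hs.eventually (by simp)
  obtain ⟨r, hr, hsub⟩ := Metric.mem_nhds_iff.1 (inter_mem ht h2)
  refine ⟨K, K.2, r, hr, fun x hx y hy => ?_⟩
  have hseg : segment ℝ x y ⊆ ball z r := (convex_ball z r).segment_subset hx hy
  have := (convex_segment x y).norm_image_sub_le_of_norm_hasFDerivWithin_le'
    (f := s) (f' := fderiv ℝ s) (φ := fderiv ℝ s x) (C := K * ‖y - x‖) (x := x) (y := y)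
    (fun w hw => ((show ContDiffAt ℝ 2 s w from (hsub (hseg hw)).2).differentiableAt
      (by norm_num)).hasFDerivAt.hasFDerivWithinAt) ?_ (left_mem_segment ℝ x y)
      (right_mem_segment ℝ x y)
  · rw [Real.norm_eq_abs] at this
    calc _ ≤ _ := this
      _ = _ := by ring
  · intro w hw
    have h3 := hK.dist_le_mul w (hsub (hseg hw)).1 x (hsub hx).1
    rw [dist_eq_norm, dist_eq_norm] at h3
    refine h3.trans ?_
    gcongr
    obtain ⟨θ, hθ, rfl⟩ := (segment_eq_image' ℝ x y).subset hw
    simp only [add_sub_cancel_left, norm_smul, Real.norm_eq_abs, abs_of_nonneg hθ.1]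
    exact mul_le_of_le_one_left (norm_nonneg _) hθ.2

lemma aux_taylor {n : ℕ} {s : Euc n → ℝ} {x : Euc n} (hs : ContDiffAt ℝ 2 s x) :
    (fun h : Euc n => s (x + h) - s x - fderiv ℝ s x h - 1/2 * fderiv ℝ (fderiv ℝ s) x h h)
      =o[𝓝 (0 : Euc n)] fun h => ‖h‖ ^ 2 := by
  have h1 : ContDiffAt ℝ 1 (fderiv ℝ s) x := hs.fderiv_right (by norm_num)
  have h1' : HasFDerivAt (fderiv ℝ s) (fderiv ℝ (fderiv ℝ s) x) x :=
    (h1.differentiableAt (by norm_num)).hasFDerivAt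
  have h2 : ∀ᶠ y in 𝓝 x, ContDiffAt ℝ 2 s y := hs.eventually (by simp)
  have hsym : IsSymmSndFDerivAt ℝ s x := hs.isSymmSndFDerivAt (by simp)
  set D := fderiv ℝ (fderiv ℝ s) x with hD
  rw [isLittleO_iff]
  intro c hc
  have h3 := (hasFDerivAt_iff_isLittleO_nhds_zero.1 h1')
  rw [isLittleO_iff] at h3
  have h2' : ∀ᶠ h in 𝓝 (0 : Euc n), ContDiffAt ℝ 2 s (x + h) := by
    have : Tendsto (fun h : Euc n => x + h) (𝓝 0) (𝓝 x) := by
      have : Continuous (fun h : Euc n => x + h) := by fun_prop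
      simpa using this.tendsto 0
    exact this.eventually h2
  obtain ⟨r, hr, hsub⟩ := Metric.mem_nhds_iff.1 (inter_mem (h3 hc) h2')
  filter_upwards [ball_mem_nhds (0 : Euc n) hr] with h hh
  have hball : closedBall (0 : Euc n) ‖h‖ ⊆ ball 0 r := closedBall_subset_ball (by simpa using hh)
  have := (convex_closedBall (0 : Euc n) ‖h‖).norm_image_sub_le_of_norm_hasFDerivWithin_le
    (f := fun h : Euc n => s (x + h) - s x - fderiv ℝ s x h - 1/2 * D h h)
    (f' := fun w => fderiv ℝ s (x + w) - fderiv ℝ s x - D w) (C := c * ‖h‖) (x := 0) (y := h)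
    ?_ ?_ (by simp) (by simp)
  · simpa [mul_assoc, pow_two] using this
  · intro w hw
    have hd : DifferentiableAt ℝ s (x + w) :=
      (show ContDiffAt ℝ 2 s (x + w) from (hsub (hball hw)).2).differentiableAt (by norm_num)
    have e1 : HasFDerivAt (fun h : Euc n => s (x + h)) (fderiv ℝ s (x + w)) w := by
      exact hd.hasFDerivAt.comp w ((hasFDerivAt_id w).const_add x)
    have e2 : HasFDerivAt (fun h : Euc n => D h h) (D w + D.flip w) w := by
      exact D.hasFDerivAt.clm_apply (hasFDerivAt_id w)
    have e3 := ((e1.sub_const (s x)).sub (fderiv ℝ s x).hasFDerivAt).sub (e2.const_mul (1/2))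
    refine (e3.congr_fderiv ?_).hasFDerivWithinAt
    ext k
    have := hsym.eq w k
    simp only [sub_apply, smul_apply, add_apply,
      ContinuousLinearMap.flip_apply, smul_eq_mul]
    rw [← hD] at this
    rw [this]; ring
  · intro w hw
    have h5 : ‖fderiv ℝ s (x + w) - fderiv ℝ s x - D w‖ ≤ c * ‖w‖ := (hsub (hball hw)).1
    refine h5.trans ?_
    gcongr
    simpa using hw

lemma aux_quad {n : ℕ} (Q rem : Euc n → ℝ) (l : Euc n →ₗ[ℝ] ℝ)
    (hQ : ∀ (t : ℝ) h, Q (t • h) = t ^ 2 * Q h)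
    (hrem : rem =o[𝓝 (0 : Euc n)] fun h => ‖h‖ ^ 2)
    (hle : ∀ᶠ h in 𝓝 (0 : Euc n), l h + 1/2 * Q h + rem h ≤ 0) (h : Euc n) : Q h ≤ 0 := by
  refine le_of_forall_pos_le_add fun e he => ?_
  rw [zero_add]
  set c := e / (2 * (‖h‖ ^ 2 + 1)) with hc
  have hcpos : 0 < c := by positivity
  have ev := hle.and (isLittleO_iff.1 hrem hcpos)
  have t1 : Tendsto (fun t : ℝ => t • h) (𝓝[>] 0) (𝓝 0) := by
    apply tendsto_nhdsWithin_of_tendsto_nhds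
    have : Continuous (fun t : ℝ => t • h) := by fun_prop
    simpa using this.tendsto 0
  have t2 : Tendsto (fun t : ℝ => (-t) • h) (𝓝[>] 0) (𝓝 0) := by
    apply tendsto_nhdsWithin_of_tendsto_nhds
    have : Continuous (fun t : ℝ => (-t) • h) := by fun_prop
    simpa using this.tendsto 0
  obtain ⟨t, ⟨⟨a1, a2⟩, ⟨b1, b2⟩⟩, htpos⟩ :=
    (((t1.eventually ev).and (t2.eventually ev)).and self_mem_nhdsWithin).exists
  have htpos : 0 < t := htpos
  rw [map_smul, hQ] at a1 b1
  simp only [norm_smul, Real.norm_eq_abs, abs_pow, abs_norm, abs_mul, abs_neg, mul_pow, sq_abs,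
    smul_eq_mul] at a1 a2 b1 b2
  have a3 := (abs_le.1 a2).1
  have b3 := (abs_le.1 b2).1
  have h1 : t ^ 2 * Q h ≤ t ^ 2 * (2 * c * ‖h‖ ^ 2) := by nlinarith
  have h2 := le_of_mul_le_mul_left h1 (by positivity)
  refine h2.trans ?_
  have : 2 * c * ‖h‖ ^ 2 ≤ 2 * c * (‖h‖ ^ 2 + 1) := by gcongr; linarith
  refine this.trans (le_of_eq ?_)
  rw [hc]; field_simp

lemma bilin_smul {n : ℕ} (A : Matrix (Fin n) (Fin n) ℝ) (t : ℝ) (h : Euc n) :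
    bilin A (t • h) (t • h) = t ^ 2 * bilin A h h := by
  simp only [bilin, Finset.mul_sum, PiLp.smul_apply, smul_eq_mul]
  refine Finset.sum_congr rfl fun i _ => Finset.sum_congr rfl fun j _ => ?_
  ring

lemma bilin_add {n : ℕ} (A B : Matrix (Fin n) (Fin n) ℝ) (h : Euc n) :
    bilin (A + B) h h = bilin A h h + bilin B h h := by
  simp only [bilin, Matrix.add_apply, add_mul, Finset.sum_add_distrib]

lemma bilin_neg {n : ℕ} (A : Matrix (Fin n) (Fin n) ℝ) (h : Euc n) :
    bilin (-A) h h = - bilin A h h := by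
  simp only [bilin, Matrix.neg_apply, neg_mul, Finset.sum_neg_distrib]

lemma bilin_hess {n : ℕ} (v : Euc n → ℝ) (x h : Euc n) :
    bilin (hessMat v x) h h = fderiv ℝ (fderiv ℝ v) x h h := by
  have e : h = ∑ i, h i • (EuclideanSpace.single i (1:ℝ) : Euc n) := by
    ext j
    simp [Finset.sum_apply, Pi.single_apply]
  conv_rhs => rw [e]
  simp only [bilin, hessMat, iteratedFDeriv_two_apply, map_sum, map_smul, sum_apply,
    smul_apply, smul_eq_mul, Finset.mul_sum]
  rw [Finset.sum_comm]
  refine Finset.sum_congr rfl fun i _ => Finset.sum_congr rfl fun j _ => ?_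
  simp only [Matrix.cons_val_zero, Matrix.cons_val_one]
  ring

lemma bilin_bound {n : ℕ} (A : Matrix (Fin n) (Fin n) ℝ) (d : ℝ)
    (hA : ∀ i j, |A i j| ≤ d) (h : Euc n) :
    -((n : ℝ) ^ 2 * d * ‖h‖ ^ 2) ≤ bilin A h h := by
  have : ∀ i j, -(d * ‖h‖ ^ 2) ≤ A i j * h i * h j := by
    intro i j
    have h1 : |A i j * h i * h j| ≤ d * ‖h‖ * ‖h‖ := by
      rw [abs_mul, abs_mul]
      have := PiLp.norm_apply_le h i
      have := PiLp.norm_apply_le h j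
      have := (abs_nonneg _).trans (hA i j)
      gcongr
      exacts [hA i j, PiLp.norm_apply_le h i, PiLp.norm_apply_le h j]
    have := (abs_le.1 h1).1
    linarith
  calc -((n : ℝ) ^ 2 * d * ‖h‖ ^ 2) = ∑ i : Fin n, ∑ j : Fin n, -(d * ‖h‖ ^ 2) := by
        simp; ring
    _ ≤ _ := Finset.sum_le_sum fun i _ => Finset.sum_le_sum fun j _ => this i j

lemma aux_psd {n : ℕ} (P : SymMat n) (h : ∀ x, 0 ≤ bilin (P : Matrix (Fin n) (Fin n) ℝ) x x) :
    (P : Matrix (Fin n) (Fin n) ℝ).PosSemidef := by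
  refine .of_dotProduct_mulVec_nonneg P.2 fun x => ?_
  have := h (WithLp.toLp 2 x)
  have e : star x ⬝ᵥ (P : Matrix (Fin n) (Fin n) ℝ).mulVec x
      = bilin (P : Matrix (Fin n) (Fin n) ℝ) (WithLp.toLp 2 x) (WithLp.toLp 2 x) := by
    simp only [bilin, dotProduct, Matrix.mulVec, Finset.mul_sum]
    refine Finset.sum_congr rfl fun i _ => Finset.sum_congr rfl fun j _ => ?_
    simp only [Pi.star_apply, star_trivial]
    ring
  rw [e]
  exact this

lemma aux_interior {n : ℕ} {F : Set (SymMat n)} (hF : IsDirichletSet F) {A B : SymMat n}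
    (hA : A ∈ F) {e : ℝ} (he : 0 < e)
    (h : ∀ x : Euc n, bilin (A : Matrix (Fin n) (Fin n) ℝ) x x
      + bilin (B : Matrix (Fin n) (Fin n) ℝ) x x + e * ‖x‖ ^ 2 ≤ 0) : -B ∈ interior F := by
  rw [mem_interior_iff_mem_nhds]
  set d := e / ((n : ℝ) ^ 2 + 1) with hd
  have hdpos : 0 < d := by positivity
  have hev : ∀ᶠ C : SymMat n in 𝓝 (-B), ∀ i j,
      |(C : Matrix (Fin n) (Fin n) ℝ) i j + (B : Matrix (Fin n) (Fin n) ℝ) i j| < d := by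
    rw [eventually_all]; intro i
    rw [eventually_all]; intro j
    have hc : Continuous fun C : SymMat n =>
      |(C : Matrix (Fin n) (Fin n) ℝ) i j + (B : Matrix (Fin n) (Fin n) ℝ) i j| := by
      have : Continuous fun C : SymMat n => (C : Matrix (Fin n) (Fin n) ℝ) i j :=
        continuous_subtype_val.matrix_elem i j
      exact (this.add continuous_const).abs
    exact hc.continuousAt.eventually_lt continuousAt_const (by simpa using hdpos)
  filter_upwards [hev] with C hC
  have : A + (C - A) ∈ F := by
    refine hF.add_psd A hA _ (aux_psd _ fun x => ?_)
    have e1 : ((C - A : SymMat n) : Matrix (Fin n) (Fin n) ℝ)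
      = ((C : Matrix (Fin n) (Fin n) ℝ) + B) + (-(A : Matrix (Fin n) (Fin n) ℝ) + -B) := by
      push_cast; abel
    rw [e1, bilin_add, bilin_add (-_), bilin_neg, bilin_neg]
    have h1 := bilin_bound ((C : Matrix (Fin n) (Fin n) ℝ) + (B : Matrix (Fin n) (Fin n) ℝ)) d (fun i j => (hC i j).le) x
    have h2 := h x
    have h3 : (n : ℝ) ^ 2 * d ≤ e := by
      rw [hd, ← mul_div_assoc, div_le_iff₀ (by positivity)]
      nlinarith
    have h4 : (n : ℝ) ^ 2 * d * ‖x‖ ^ 2 ≤ e * ‖x‖ ^ 2 := by gcongr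
    linarith
  simpa using this

theorem quasiconvex_ae_typeF {n : ℕ} (F : Set (SymMat n)) (hF : IsDirichletSet F)
    (X : Set (Euc n)) (hX : IsOpen X) (u : Euc n → ℝ) (lam : ℝ) (hlam : 0 < lam)
    (hq : ∀ x ∈ X, ∃ B, IsOpen B ∧ Convex ℝ B ∧ x ∈ B ∧ B ⊆ X ∧
        ConvexOn ℝ B (fun y => u y + lam * (1/2 * ‖y‖ ^ 2)))
    (hae : ∀ᵐ x ∂(volume : Measure (Euc n)), x ∈ X →
        ∃ A ∈ F, TwiceDiffWithHessAt u x (A : Matrix (Fin n) (Fin n) ℝ)) :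
    IsTypeF F X (fun x => (u x : EReal)) := by
  intro v hv K hK hKX a ha x₀ hx₀
  obtain ⟨hv2, hvF⟩ := hv
  have hvat : ∀ x ∈ X, ContDiffAt ℝ 2 v x := fun x hx => hv2.contDiffAt (hX.mem_nhds hx)
  have hfr : ∀ x ∈ frontier K, u x + v x ≤ a x := fun x hx => by
    have h := ha x hx
    beta_reduce at h
    exact_mod_cast h
  suffices h : u x₀ + v x₀ ≤ a x₀ by
    beta_reduce
    exact_mod_cast h
  by_contra hcon
  push Not at hcon
  have hacont : Continuous a := a.continuous_of_finiteDimensional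
  -- continuity of u
  have hucont : ContinuousOn u X := by
    intro x hx
    obtain ⟨B, hBo, -, hxB, -, hBc⟩ := hq x hx
    have h1 : ContinuousAt (fun y => u y + lam * (1/2 * ‖y‖ ^ 2)) x :=
      (hBc.continuousOn hBo).continuousAt (hBo.mem_nhds hxB)
    have h2 : ContinuousAt (fun y : Euc n => lam * (1/2 * ‖y‖ ^ 2)) x := by fun_prop
    have h3 := h1.sub h2
    refine ContinuousAt.continuousWithinAt (h3.congr (Eventually.of_forall fun y => ?_))
    simp
  obtain ⟨R₀, hR₀, hKR⟩ := hK.isBounded.exists_pos_norm_le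
  set w₀ := u x₀ + v x₀ - a x₀ with hw₀
  have hw₀pos : 0 < w₀ := by linarith
  set e := w₀ / (2 * R₀ ^ 2) with he
  have hepos : 0 < e := by positivity
  have heR : e * R₀ ^ 2 < w₀ := by
    have : e * R₀ ^ 2 = w₀ / 2 := by rw [he]; field_simp
    linarith
  have hφ : ContinuousOn (fun y => u y + v y - a y + e * ‖y‖ ^ 2) K :=
    (((hucont.mono hKX).add (hv2.continuousOn.mono hKX)).sub hacont.continuousOn).add
      (by fun_prop)
  obtain ⟨z, hzK, hzmax⟩ := hK.exists_isMaxOn ⟨x₀, hx₀⟩ hφ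
  have hz0 : w₀ + e * ‖x₀‖ ^ 2 ≤ u z + v z - a z + e * ‖z‖ ^ 2 := hzmax hx₀
  have hzint : z ∈ interior K := by
    by_contra hni
    have hzf : z ∈ frontier K := ⟨subset_closure hzK, hni⟩
    have h1 := hfr z hzf
    have h2 : e * ‖z‖ ^ 2 ≤ e * R₀ ^ 2 := by
      have := hKR z hzK
      gcongr
    have h3 : 0 ≤ e * ‖x₀‖ ^ 2 := by positivity
    linarith
  have hzX : z ∈ X := hKX hzK
  set s : Euc n → ℝ := fun y => v y - a y + e * ‖y‖ ^ 2 - e / 2 * ‖y - z‖ ^ 2 with hs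
  have hscd : ContDiffAt ℝ 2 s z := by
    have h1 : ContDiff ℝ 2 a := by
      have : (a : Euc n → ℝ) = fun y => a.linear.toContinuousLinearMap y + a 0 := by
        funext y
        have := congrFun (AffineMap.decomp a) y
        simpa using this
      rw [this]
      fun_prop
    have h2 : ContDiff ℝ 2 (fun y : Euc n => ‖y‖ ^ 2) := contDiff_norm_sq ℝ
    have h3 : ContDiff ℝ 2 (fun y : Euc n => ‖y - z‖ ^ 2) := h2.comp (contDiff_id.sub contDiff_const)
    exact (((hvat z hzX).sub h1.contDiffAt).add (contDiffAt_const.mul h2.contDiffAt)).sub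
      (contDiffAt_const.mul h3.contDiffAt)
  obtain ⟨L, hL, r, hr, hLr⟩ := aux_smooth hscd
  obtain ⟨B, hBo, -, hzB, hBX, hBc⟩ := hq z hzX
  obtain ⟨R, hR, hRsub⟩ := Metric.mem_nhds_iff.1
    (inter_mem (inter_mem (isOpen_interior.mem_nhds hzint) (hBo.mem_nhds hzB)) (ball_mem_nhds z hr))
  have hBK : ball z R ⊆ K := fun y hy => interior_subset (hRsub hy).1.1
  have hcvx : ConvexOn ℝ (ball z R) (fun y => u y + lam * (1/2 * ‖y‖ ^ 2)) :=
    hBc.subset (fun y hy => (hRsub hy).1.2) (convex_ball z R)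
  have hscont : ContinuousOn s (ball z R) := by
    have h1 : ContinuousOn v (ball z R) := hv2.continuousOn.mono (hBK.trans hKX)
    exact ((h1.sub hacont.continuousOn).add (by fun_prop)).sub (by fun_prop)
  have hE := aux_jensen (g := fun y => u y + s y) (z := z) (R := R) (C := L + lam / 2) (c := e / 2)
    hR (by positivity) (by positivity) ((hucont.mono (hBK.trans hKX)).add hscont)
    (fun x hx p hp => aux_semiconvex isOpen_ball hcvx (fderiv ℝ s)
      (fun x hx y hy => hLr x (hRsub hx).2 y (hRsub hy).2) hx hp)
    (by
      intro y hy
      have h1 : u y + v y - a y + e * ‖y‖ ^ 2 ≤ u z + v z - a z + e * ‖z‖ ^ 2 := hzmax (hBK hy)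
      simp only [hs, sub_self, norm_zero]
      linarith)
  obtain ⟨x, ⟨hxR, p, hp⟩, hxA⟩ : ∃ x, x ∈ {x | x ∈ closedBall z (R/8) ∧ ∃ p : Euc n,
      ∀ y ∈ ball z R, u y + s y ≤ u x + s x + ⟪p, y - x⟫} ∧ (x ∈ X →
        ∃ A ∈ F, TwiceDiffWithHessAt u x (A : Matrix (Fin n) (Fin n) ℝ)) := by
    by_contra hne
    push Not at hne
    refine hE (measure_mono_null ?_ (ae_iff.1 hae))
    intro x hx hx'
    obtain ⟨h1, h2⟩ := hne x hx
    obtain ⟨A, hA, hA'⟩ := hx' h1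
    exact h2 A hA hA'
  have hxb : x ∈ ball z R := closedBall_subset_ball (by linarith) hxR
  have hxX : x ∈ X := hKX (hBK hxb)
  obtain ⟨A, hAF, q, hq'⟩ := hxA hxX
  obtain ⟨Bm, hBF, hBh⟩ := hvF x hxX
  refine hBF (aux_interior hF hAF hepos fun h => ?_)
  have ht := aux_taylor (hvat x hxX)
  refine aux_quad (fun h => bilin (A : Matrix (Fin n) (Fin n) ℝ) h h
      + bilin (Bm : Matrix (Fin n) (Fin n) ℝ) h h + e * ‖h‖ ^ 2) _
      ((innerSL ℝ (q - p + (2 * e) • x - e • (x - z)) : Euc n →L[ℝ] ℝ).toLinearMap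
        + (fderiv ℝ v x).toLinearMap - a.linear) ?_ (hq'.add ht) ?_ h
  · intro t h
    simp only [bilin_smul, norm_smul, Real.norm_eq_abs, mul_pow, sq_abs]
    ring
  · have hev : ∀ᶠ h in 𝓝 (0 : Euc n), x + h ∈ ball z R := by
      have : Continuous (fun h : Euc n => x + h) := by fun_prop
      apply this.continuousAt
      simpa using isOpen_ball.mem_nhds hxb
    filter_upwards [hev] with h hh
    have h1 := hp _ hh
    have e1 := norm_add_sq_real x h
    have e2 := norm_add_sq_real (x - z) h
    have e3 : x + h - z = x - z + h := by abel
    have e4 : a (x + h) = a.linear h + a x := by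
      have := a.map_vadd x h
      simpa [add_comm] using this
    simp only [hs, e3, add_sub_cancel_left] at h1
    rw [e1, e2, e4] at h1
    rw [hBh, bilin_hess]
    simp only [LinearMap.sub_apply, LinearMap.add_apply, ContinuousLinearMap.coe_coe,
      innerSL_apply_apply, inner_sub_left, inner_add_left, inner_smul_left, conj_trivial] at h1 ⊢
    linarith
end
end

section
/- Let F ⊂ Sym²(ℝⁿ) be a Dirichlet set, X ⊂ ℝⁿ open, and u a function of type F on X with |u| ≤ N on X for some N > 0. For ε > 0 set δ = √(2εN), define the sup-convolution u^ε(x) = sup_{y ∈ X} ( u(y) − (1/ε)|x − y|² ) for x ∈ ℝⁿ, and set X_δ = {x ∈ X : dist(x, ℝⁿ ∖ X) > δ}. Then: (1) for every x ∈ X, the map ε ↦ u^ε(x) is nondecreasing in ε and u^ε(x) → u(x) as ε → 0⁺; (2) the function x ↦ u^ε(x) + (1/ε)|x|² is convex on ℝⁿ (so u^ε is quasiconvex); (3) the restriction of u^ε to X_δ is of type F on X_δ. -/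
open Set Metric Filter MeasureTheory Asymptotics
open scoped Topology BigOperators RealInnerProductSpace

noncomputable section

lemma taylor_aux {n : ℕ} {v : Euc n → ℝ} {x₀ : Euc n} (hv : ContDiffAt ℝ 2 v x₀) {c : ℝ}
    (hc : 0 < c) : ∀ᶠ r in 𝓝[>] (0 : ℝ), ∀ h : Euc n, ‖h‖ ≤ r →
      v x₀ + fderiv ℝ v x₀ h + 1/2 * fderiv ℝ (fderiv ℝ v) x₀ h h - c * ‖h‖ ^ 2 ≤ v (x₀ + h) := by
  have hsymm : IsSymmSndFDerivAt ℝ v x₀ := hv.isSymmSndFDerivAt (by simp)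
  set L := fderiv ℝ (fderiv ℝ v) x₀ with hL
  have hd : DifferentiableAt ℝ (fderiv ℝ v) x₀ :=
    (hv.fderiv_right (m := 1) (by norm_num)).differentiableAt (by norm_num)
  have h1 : ∀ᶠ y in 𝓝 x₀, ‖fderiv ℝ v y - fderiv ℝ v x₀ - L (y - x₀)‖ ≤ c * ‖y - x₀‖ :=
    hd.hasFDerivAt.isLittleO.def hc
  have h2 : ∀ᶠ y in 𝓝 x₀, DifferentiableAt ℝ v y := by
    filter_upwards [hv.eventually (by simp)] with y hy
    exact hy.differentiableAt (by norm_num)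
  obtain ⟨ρ, hρ, hball⟩ := Metric.eventually_nhds_iff_ball.1 (h1.and h2)
  have : Ioo (0:ℝ) ρ ∈ 𝓝[>] (0:ℝ) := Ioo_mem_nhdsGT hρ
  filter_upwards [this] with r hr h hh
  have key : ‖(fun y => v y - 1/2 * L (y - x₀) (y - x₀)) (x₀ + h) -
      (fun y => v y - 1/2 * L (y - x₀) (y - x₀)) x₀ - fderiv ℝ v x₀ (x₀ + h - x₀)‖
      ≤ (c * ‖h‖) * ‖x₀ + h - x₀‖ := by
    apply (convex_closedBall x₀ ‖h‖).norm_image_sub_le_of_norm_hasFDerivWithin_le' (𝕜 := ℝ)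
      (f := fun y => v y - 1/2 * L (y - x₀) (y - x₀)) (φ := fderiv ℝ v x₀)
      (f' := fun y => fderiv ℝ v y - L (y - x₀))
    · intro y hy
      have hyb : y ∈ ball x₀ ρ := by
        rw [mem_closedBall] at hy; rw [mem_ball]; linarith [hr.2]
      refine HasFDerivAt.hasFDerivWithinAt ?_
      have e1 := (hball y hyb).2.hasFDerivAt
      have e2 : HasFDerivAt (fun y => y - x₀) (ContinuousLinearMap.id ℝ (Euc n)) y :=
        (hasFDerivAt_id y).sub_const x₀
      have e3 : HasFDerivAt (fun y => L (y - x₀)) (L.comp (ContinuousLinearMap.id ℝ (Euc n))) y :=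
        L.hasFDerivAt.comp y e2
      have e4 := (e3.clm_apply e2).const_mul (1/2 : ℝ)
      refine (e1.sub e4).congr_fderiv ?_
      ext z
      have t1 := hsymm z y
      have t2 := hsymm z x₀
      rw [← hL] at t1 t2
      simp
      linarith
    · intro y hy
      have hyb : y ∈ ball x₀ ρ := by
        rw [mem_closedBall] at hy; rw [mem_ball]; linarith [hr.2]
      have := (hball y hyb).1
      rw [mem_closedBall, dist_eq_norm] at hy
      calc _ = ‖fderiv ℝ v y - fderiv ℝ v x₀ - L (y - x₀)‖ := by congr 1; abel
        _ ≤ _ := this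
        _ ≤ _ := by gcongr
    · simp
    · simp [mem_closedBall, dist_eq_norm]
  simp only [add_sub_cancel_left, sub_self, map_zero, Real.norm_eq_abs, mul_zero, sub_zero] at key
  have := (abs_le.1 key).1
  nlinarith

lemma quad_aux {n : ℕ} (B : Euc n →L[ℝ] Euc n →L[ℝ] ℝ) (hB : ∀ x y, B x y = B y x)
    (y₀ : Euc n) :
    ContDiff ℝ 2 (fun y => 1/2 * B (y - y₀) (y - y₀)) ∧
    ∀ y i j, hessMat (fun y => 1/2 * B (y - y₀) (y - y₀)) y i j =
      B (EuclideanSpace.single i 1) (EuclideanSpace.single j 1) := by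
  constructor
  · fun_prop
  · intro y i j
    have e2 : ∀ y, HasFDerivAt (fun y => y - y₀) (ContinuousLinearMap.id ℝ (Euc n)) y :=
      fun y => (hasFDerivAt_id y).sub_const y₀
    have e3 : ∀ y, HasFDerivAt (fun y => B (y - y₀))
        (B.comp (ContinuousLinearMap.id ℝ (Euc n))) y := fun y => B.hasFDerivAt.comp y (e2 y)
    have e5 : fderiv ℝ (fun y => 1/2 * B (y - y₀) (y - y₀)) = fun y => B (y - y₀) := by
      funext y
      refine ((((e3 y).clm_apply (e2 y)).const_mul (1/2 : ℝ)).congr_fderiv ?_).fderiv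
      ext z
      have t1 := hB z y
      have t2 := hB z y₀
      simp
      linarith
    unfold hessMat
    rw [iteratedFDeriv_two_apply, e5, (e3 y).fderiv]
    simp

lemma dual_add {n : ℕ} {F : Set (SymMat n)} (hF : IsDirichletSet F) {A : SymMat n}
    (hA : A ∈ dirDual F) {η : ℝ} (hη : 0 ≤ η) : A + η • symOne n ∈ dirDual F := by
  intro h
  apply hA
  have hopen : IsOpen {M : SymMat n | M - η • symOne n ∈ interior F} :=
    isOpen_interior.preimage (continuous_id.sub continuous_const)
  refine interior_maximal (s := F) (t := {M : SymMat n | M - η • symOne n ∈ interior F}) ?_ hopen ?_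
  · intro M hM
    have := hF.add_psd _ (interior_subset hM) (η • symOne n) (by
      have : ((η • symOne n : SymMat n) : Matrix (Fin n) (Fin n) ℝ) = η • 1 := rfl
      rw [this]
      exact Matrix.PosSemidef.one.smul hη)
    simpa using this
  · show -A - η • symOne n ∈ interior F
    convert h using 1
    abel

lemma point_aux {n : ℕ} {F : Set (SymMat n)} (hF : IsDirichletSet F)
    {X : Set (Euc n)} (hX : IsOpen X) {u : Euc n → ℝ}
    (hu : IsTypeF F X (fun x => (u x : EReal))) {y₀ : Euc n} (hy₀ : y₀ ∈ X)
    (L : Euc n →L[ℝ] Euc n →L[ℝ] ℝ) (hL : ∀ x y, L x y = L y x) {A : SymMat n}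
    (hA : A ∈ dirDual F)
    (hAL : ∀ i j, (A : Matrix (Fin n) (Fin n) ℝ) i j =
      L (EuclideanSpace.single i 1) (EuclideanSpace.single j 1))
    (l : Euc n →L[ℝ] ℝ) {η : ℝ} (hη : 0 < η) {r : ℝ} (hr : 0 < r)
    (hrX : closedBall y₀ r ⊆ X)
    (hle : ∀ h : Euc n, ‖h‖ ≤ r →
      u (y₀ + h) + 1/2 * L h h + η/2 * ‖h‖ ^ 2 ≤ u y₀ + l h - η/4 * ‖h‖ ^ 2) : False := by
  obtain ⟨I, hI⟩ : ∃ I : Euc n →L[ℝ] Euc n →L[ℝ] ℝ, ∀ x y, I x y = ⟪x, y⟫ :=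
    ⟨innerSL ℝ, fun x y => rfl⟩
  set B : Euc n →L[ℝ] Euc n →L[ℝ] ℝ := L + η • I with hBdef
  have hBa : ∀ x y, B x y = L x y + η * ⟪x, y⟫ := fun x y => by simp [hBdef, hI]
  have hB : ∀ x y, B x y = B y x := fun x y => by
    rw [hBa, hBa, hL, real_inner_comm]
  obtain ⟨hC, hH⟩ := quad_aux B hB y₀
  have hT : IsTypeFC2 (dirDual F) X (fun y => 1/2 * B (y - y₀) (y - y₀)) := by
    refine ⟨hC.contDiffOn, fun x _ => ⟨A + η • symOne n, dual_add hF hA hη.le, ?_⟩⟩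
    ext i j
    rw [hH, hBa, ← hAL]
    have : ((A + η • symOne n : SymMat n) : Matrix (Fin n) (Fin n) ℝ) = A + η • 1 := rfl
    rw [this]
    simp [Matrix.one_apply]
    rw [EuclideanSpace.inner_single_left]
    by_cases hij : i = j <;> simp [hij]
  have := hu _ hT (closedBall y₀ r) (isCompact_closedBall _ _) hrX
    ((l : Euc n →ₗ[ℝ] ℝ).toAffineMap + AffineMap.const ℝ (Euc n) (u y₀ - l y₀ - η/4 * r^2)) ?_
    y₀ (mem_closedBall_self hr.le)
  · beta_reduce at this
    rw [← EReal.coe_add, EReal.coe_le_coe_iff] at this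
    simp at this
    have : 0 < η / 4 * r ^ 2 := by positivity
    linarith
  · intro x hx
    rw [frontier_closedBall _ hr.ne', mem_sphere, dist_eq_norm] at hx
    beta_reduce
    rw [← EReal.coe_add, EReal.coe_le_coe_iff]
    have h1 := hle (x - y₀) hx.le
    rw [hBa, real_inner_self_eq_norm_sq]
    simp only [add_sub_cancel, map_sub, hx] at h1
    simp [hx]
    simp at h1
    linarith

section sup
variable {n : ℕ} {X : Set (Euc n)} {u : Euc n → ℝ} {N : ℝ} {U : ℝ → Euc n → ℝ}

lemma le_U (hbd : ∀ x ∈ X, |u x| ≤ N) (hU : ∀ ε : ℝ, 0 < ε → ∀ x : Euc n,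
        U ε x = sSup {t : ℝ | ∃ y ∈ X, t = u y - (1/ε) * ‖x - y‖ ^ 2}) {ε : ℝ} (hε : 0 < ε)
    (x : Euc n) {y : Euc n} (hy : y ∈ X) : u y - (1/ε) * ‖x - y‖ ^ 2 ≤ U ε x := by
  rw [hU ε hε x]
  refine le_csSup ⟨N, ?_⟩ ⟨y, hy, rfl⟩
  rintro t ⟨z, hz, rfl⟩
  have := (abs_le.1 (hbd z hz)).2
  have : 0 ≤ (1/ε) * ‖x - z‖ ^ 2 := by positivity
  linarith

lemma U_le (hne : X.Nonempty) (hU : ∀ ε : ℝ, 0 < ε → ∀ x : Euc n,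
        U ε x = sSup {t : ℝ | ∃ y ∈ X, t = u y - (1/ε) * ‖x - y‖ ^ 2}) {ε : ℝ} (hε : 0 < ε)
    (x : Euc n) {M : ℝ} (h : ∀ y ∈ X, u y - (1/ε) * ‖x - y‖ ^ 2 ≤ M) : U ε x ≤ M := by
  rw [hU ε hε x]
  obtain ⟨y, hy⟩ := hne
  refine csSup_le ⟨_, y, hy, rfl⟩ ?_
  rintro t ⟨z, hz, rfl⟩
  exact h z hz

lemma attained (hN : 0 < N) (hbd : ∀ x ∈ X, |u x| ≤ N) (husc : UpperSemicontinuousOn u X)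
    (hU : ∀ ε : ℝ, 0 < ε → ∀ x : Euc n,
        U ε x = sSup {t : ℝ | ∃ y ∈ X, t = u y - (1/ε) * ‖x - y‖ ^ 2}) {ε : ℝ} (hε : 0 < ε)
    {x : Euc n} (hx : x ∈ X) (hd : Real.sqrt (2 * ε * N) < Metric.infDist x Xᶜ) :
    ∃ y ∈ X, U ε x ≤ u y - (1/ε) * ‖x - y‖ ^ 2 := by
  set δ := Real.sqrt (2 * ε * N) with hδ
  have hδ0 : 0 ≤ δ := Real.sqrt_nonneg _
  have hδ2 : δ ^ 2 = 2 * ε * N := Real.sq_sqrt (by positivity)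
  have hsub : closedBall x δ ⊆ X := by
    intro y hy
    by_contra hyX
    have := Metric.infDist_le_dist_of_mem (x := x) (s := Xᶜ) hyX
    rw [mem_closedBall, dist_comm] at hy
    linarith
  have hus : UpperSemicontinuousOn (fun y => u y + (-(1/ε) * ‖x - y‖ ^ 2)) (closedBall x δ) :=
    (husc.mono hsub).add (Continuous.continuousOn (by fun_prop)).upperSemicontinuousOn
  obtain ⟨y, hy, hmax⟩ := hus.exists_isMaxOn ⟨x, mem_closedBall_self hδ0⟩ (isCompact_closedBall _ _)
  refine ⟨y, hsub hy, U_le ⟨x, hx⟩ hU hε x fun z hz => ?_⟩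
  by_cases hzb : z ∈ closedBall x δ
  · have : u z + (-(1/ε) * ‖x - z‖ ^ 2) ≤ u y + (-(1/ε) * ‖x - y‖ ^ 2) := hmax hzb
    linarith
  · have h1 : u x + (-(1/ε) * ‖x - x‖ ^ 2) ≤ u y + (-(1/ε) * ‖x - y‖ ^ 2) :=
      hmax (mem_closedBall_self hδ0)
    simp only [sub_self, norm_zero] at h1
    have h2 : δ < ‖x - z‖ := by
      rw [mem_closedBall, dist_comm, dist_eq_norm] at hzb
      exact not_le.1 hzb
    have h3 : (1/ε) * δ ^ 2 ≤ (1/ε) * ‖x - z‖ ^ 2 := by gcongr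
    have h4 : (1/ε) * δ ^ 2 = 2 * N := by rw [hδ2]; field_simp
    have := abs_le.1 (hbd z hz)
    have := abs_le.1 (hbd x hx)
    linarith

lemma convex_aux (hbd : ∀ x ∈ X, |u x| ≤ N) (hU : ∀ ε : ℝ, 0 < ε → ∀ x : Euc n,
        U ε x = sSup {t : ℝ | ∃ y ∈ X, t = u y - (1/ε) * ‖x - y‖ ^ 2}) {ε : ℝ} (hε : 0 < ε) :
    ConvexOn ℝ Set.univ (fun x => U ε x + (1/ε) * ‖x‖ ^ 2) := by
  have hsq : ∀ (x z : Euc n) (a b : ℝ), ‖a • x + b • z‖ ^ 2 =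
      a^2 * ‖x‖ ^ 2 + 2 * (a * b * ⟪x, z⟫) + b^2 * ‖z‖ ^ 2 := by
    intro x z a b
    rw [norm_add_sq_real, norm_smul, norm_smul, mul_pow, mul_pow, real_inner_smul_left,
      real_inner_smul_right, Real.norm_eq_abs, Real.norm_eq_abs, sq_abs, sq_abs]
    ring
  rcases X.eq_empty_or_nonempty with hE | hne
  · have : ∀ x, U ε x = 0 := by
      intro x
      rw [hU ε hε x, hE]; simp
    simp only [this, zero_add]
    refine ⟨convex_univ, fun x _ z _ a b ha hb hab => ?_⟩
    simp only [hsq, smul_eq_mul]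
    have h1 : 0 ≤ (1/ε) * (a * b * ‖x - z‖ ^ 2) := by positivity
    rw [norm_sub_sq_real] at h1
    obtain rfl : b = 1 - a := by linarith
    nlinarith
  · refine ⟨convex_univ, fun x _ z _ a b ha hb hab => ?_⟩
    simp only [smul_eq_mul]
    rw [← le_sub_iff_add_le]
    refine U_le hne hU hε _ fun y hy => ?_
    have h1 := mul_le_mul_of_nonneg_left (le_U hbd hU hε x hy) ha
    have h2 := mul_le_mul_of_nonneg_left (le_U hbd hU hε z hy) hb
    rw [norm_sub_sq_real] at h1 h2 ⊢
    rw [inner_add_left, real_inner_smul_left, real_inner_smul_left]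
    obtain rfl : b = 1 - a := by linarith
    linarith

lemma lim_aux (hX : IsOpen X) (husc : UpperSemicontinuousOn u X)
    (hbd : ∀ x ∈ X, |u x| ≤ N) (hU : ∀ ε : ℝ, 0 < ε → ∀ x : Euc n,
        U ε x = sSup {t : ℝ | ∃ y ∈ X, t = u y - (1/ε) * ‖x - y‖ ^ 2}) {x : Euc n} (hx : x ∈ X) :
    Filter.Tendsto (fun ε => U ε x) (𝓝[>] (0 : ℝ)) (𝓝 (u x)) := by
  rw [tendsto_order]
  have hge : ∀ ε : ℝ, 0 < ε → u x ≤ U ε x := fun ε hε => by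
    simpa using le_U hbd hU hε x hx
  constructor
  · intro c hc
    filter_upwards [self_mem_nhdsWithin] with ε hε
    exact hc.trans_le (hge ε hε)
  · intro c hc
    obtain ⟨d, hd1, hd2⟩ := exists_between hc
    have h1 : ∀ᶠ y in 𝓝[X] x, u y < d := husc x hx d hd1
    rw [hX.nhdsWithin_eq hx] at h1
    obtain ⟨ρ, hρ, hball⟩ := Metric.eventually_nhds_iff_ball.1 h1
    have h2 : Tendsto (fun ε : ℝ => ε⁻¹ * ρ ^ 2) (𝓝[>] 0) atTop :=
      tendsto_inv_nhdsGT_zero.atTop_mul_const (by positivity)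
    filter_upwards [self_mem_nhdsWithin, h2.eventually_ge_atTop (N - d)] with ε hε hεN
    have hε : 0 < ε := hε
    refine lt_of_le_of_lt (U_le ⟨x, hx⟩ hU hε x (M := d) fun y hy => ?_) hd2
    by_cases hyb : y ∈ ball x ρ
    · have := hball y hyb
      have : 0 ≤ (1/ε) * ‖x - y‖ ^ 2 := by positivity
      linarith
    · have h3 : ρ ≤ ‖x - y‖ := by
        rw [mem_ball, dist_comm, dist_eq_norm] at hyb
        exact not_lt.1 hyb
      have h4 : (1/ε) * ρ ^ 2 ≤ (1/ε) * ‖x - y‖ ^ 2 := by gcongr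
      have := abs_le.1 (hbd y hy)
      rw [one_div] at *
      linarith

end sup

/-- Theorem 8.2, sup-convolution approximation. -/
theorem sup_convolution_approximation {n : ℕ} (F : Set (SymMat n)) (hF : IsDirichletSet F)
    (X : Set (Euc n)) (hX : IsOpen X) (u : Euc n → ℝ)
    (husc : UpperSemicontinuousOn u X) (hu : IsTypeF F X (fun x => (u x : EReal)))
    (N : ℝ) (hN : 0 < N) (hbd : ∀ x ∈ X, |u x| ≤ N)
    (U : ℝ → Euc n → ℝ)
    (hU : ∀ ε : ℝ, 0 < ε → ∀ x : Euc n,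
        U ε x = sSup {t : ℝ | ∃ y ∈ X, t = u y - (1/ε) * ‖x - y‖ ^ 2}) :
    (∀ x ∈ X, (∀ ε₁ ε₂ : ℝ, 0 < ε₁ → ε₁ ≤ ε₂ → U ε₁ x ≤ U ε₂ x) ∧
        Filter.Tendsto (fun ε => U ε x) (𝓝[>] (0 : ℝ)) (𝓝 (u x))) ∧
    (∀ ε : ℝ, 0 < ε → ConvexOn ℝ Set.univ (fun x => U ε x + (1/ε) * ‖x‖ ^ 2)) ∧
    (∀ ε : ℝ, 0 < ε →
      IsTypeF F {x ∈ X | Real.sqrt (2 * ε * N) < Metric.infDist x Xᶜ}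
        (fun x => (U ε x : EReal))) := by
  refine ⟨fun x hx => ⟨fun ε₁ ε₂ h1 h12 => ?_, lim_aux hX husc hbd hU hx⟩,
    fun ε hε => convex_aux hbd hU hε, fun ε hε => ?_⟩
  · refine U_le ⟨x, hx⟩ hU h1 x fun y hy => ?_
    have := le_U hbd hU (h1.trans_le h12) x hy
    have : (1/ε₂) * ‖x - y‖ ^ 2 ≤ (1/ε₁) * ‖x - y‖ ^ 2 := by gcongr
    linarith
  · intro v hv K hK hKX a hfr x₁ hx₁
    beta_reduce
    rw [← EReal.coe_add, EReal.coe_le_coe_iff]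
    have hfr' : ∀ x ∈ frontier K, U ε x + v x ≤ a x := fun x hx => by
      have := hfr x hx
      beta_reduce at this
      rwa [← EReal.coe_add, EReal.coe_le_coe_iff] at this
    by_contra hcon
    rw [not_le] at hcon
    have hUc : Continuous (U ε) := by
      have h1 := (convex_aux hbd hU hε).continuousOn isOpen_univ
      rw [continuousOn_univ] at h1
      have h2 := h1.sub (g := fun x : Euc n => (1/ε) * ‖x‖ ^ 2) (by fun_prop)
      refine h2.congr fun x => ?_
      simp
    have hXo : IsOpen {x ∈ X | Real.sqrt (2 * ε * N) < Metric.infDist x Xᶜ} :=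
      hX.inter (isOpen_lt continuous_const (Metric.continuous_infDist_pt _))
    have hac : Continuous a := a.continuous_of_finiteDimensional
    obtain ⟨R, hR⟩ := hK.isBounded.exists_norm_le
    set g₁ := U ε x₁ + v x₁ - a x₁ with hg₁
    have hg₁0 : 0 < g₁ := by linarith
    set η := g₁ / (R ^ 2 + 1) with hη
    have hη0 : 0 < η := by positivity
    have hηR : η * R ^ 2 < g₁ := by
      have : η * (R ^ 2 + 1) = g₁ := by rw [hη]; field_simp
      linarith
    have hGc : ContinuousOn (fun x => U ε x + v x - a x + η * ‖x‖ ^ 2) K := by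
      refine ((hUc.continuousOn.add (hv.1.continuousOn.mono hKX)).sub hac.continuousOn).add ?_
      fun_prop
    obtain ⟨x₀, hx₀, hmax⟩ := hK.exists_isMaxOn ⟨x₁, hx₁⟩ hGc
    have hmax' : ∀ x ∈ K, U ε x + v x - a x + η * ‖x‖ ^ 2 ≤
      U ε x₀ + v x₀ - a x₀ + η * ‖x₀‖ ^ 2 := fun x hx => hmax hx
    have hint : x₀ ∈ interior K := by
      by_contra hni
      have h1 := hfr' x₀ ⟨subset_closure hx₀, hni⟩
      have h2 := hmax' x₁ hx₁
      have h3 : η * ‖x₀‖ ^ 2 ≤ η * R ^ 2 := by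
        gcongr
        exact hR x₀ hx₀
      have : 0 ≤ η * ‖x₁‖ ^ 2 := by positivity
      linarith
    obtain ⟨hx₀X, hx₀d⟩ := hKX hx₀
    obtain ⟨y₀, hy₀, hUy₀⟩ := attained hN hbd husc hU hε hx₀X hx₀d
    obtain ⟨A, hA, hAv⟩ := hv.2 x₀ (hKX hx₀)
    have hvx : ContDiffAt ℝ 2 v x₀ := hv.1.contDiffAt (hXo.mem_nhds (hKX hx₀))
    have hsymm : IsSymmSndFDerivAt ℝ v x₀ := hvx.isSymmSndFDerivAt (by simp)
    have hT := taylor_aux hvx (c := η/4) (by positivity)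
    have hb1 : ∀ᶠ r in 𝓝[>] (0:ℝ), closedBall x₀ r ⊆ K :=
      nhdsWithin_le_nhds (eventually_closedBall_subset (mem_interior_iff_mem_nhds.1 hint))
    have hb2 : ∀ᶠ r in 𝓝[>] (0:ℝ), closedBall y₀ r ⊆ X :=
      nhdsWithin_le_nhds (eventually_closedBall_subset (hX.mem_nhds hy₀))
    obtain ⟨r, hTr, hrK, hrX, hr0⟩ :=
      (hT.and (hb1.and (hb2.and self_mem_nhdsWithin))).exists
    have hr0 : 0 < r := hr0
    refine point_aux hF hX hu hy₀ (fderiv ℝ (fderiv ℝ v) x₀) (fun x y => hsymm x y) hA ?_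
      (-fderiv ℝ v x₀ + LinearMap.toContinuousLinearMap a.linear - (2 * η) • innerSL ℝ x₀)
      hη0 hr0 hrX ?_
    · intro i j
      rw [hAv, hessMat, iteratedFDeriv_two_apply]
      simp
    · intro h hh
      have h1 := hTr h hh
      have h2 := hmax' (x₀ + h) (hrK (by simpa [mem_closedBall, dist_eq_norm] using hh))
      have h3 := le_U hbd hU hε (x₀ + h) (y := y₀ + h)
        (hrX (by simpa [mem_closedBall, dist_eq_norm] using hh))
      rw [add_sub_add_right_eq_sub] at h3
      have h4 : a (x₀ + h) = a x₀ + a.linear h := by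
        have := a.map_vadd x₀ h
        simp only [vadd_eq_add] at this
        rw [add_comm, this, add_comm]
      rw [norm_add_sq_real, h4] at h2
      simp
      linarith
end
end

section
/- Let n ≥ 1 and let c be a real number with −nπ/2 < c < nπ/2. Then the set F_c = {A ∈ Sym²(ℝⁿ) : Σ_{i=1}^{n} arctan(λ_i(A)) ≥ c}, where λ₁(A), …, λₙ(A) are the eigenvalues of A counted with multiplicity, is a Dirichlet set, and its Dirichlet dual satisfies F̃_c = F_{−c}. -/
open Set Metric Filter MeasureTheory Asymptotics
open scoped Topology BigOperators RealInnerProductSpace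

noncomputable section

/-- A selfadjoint real matrix is Hermitian. -/
theorem SymMat.isHermitian {n : ℕ} (A : SymMat n) :
    (A : Matrix (Fin n) (Fin n) ℝ).IsHermitian := A.prop

/-- The eigenvalues (with multiplicity) of a symmetric matrix. -/
noncomputable def symEig {n : ℕ} (A : SymMat n) : Fin n → ℝ :=
  (SymMat.isHermitian A).eigenvalues

theorem weyl_aux {N : ℕ} {E : Type*} [NormedAddCommGroup E] [InnerProductSpace ℝ E]
    (u v : OrthonormalBasis (Fin N) ℝ E) (a b : Fin N → ℝ) (ha : Antitone a) (hb : Antitone b)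
    (h : ∀ x : E, ∑ j, a j * (inner ℝ (u j) x) ^ 2 ≤ ∑ j, b j * (inner ℝ (v j) x) ^ 2)
    (k : Fin N) : a k ≤ b k := by
  haveI : FiniteDimensional ℝ E := u.toBasis.finiteDimensional_of_finite
  let L : E →ₗ[ℝ] ({j : Fin N // j ≠ k} → ℝ) :=
    LinearMap.pi fun j => if k < j.1 then innerₛₗ ℝ (u j.1) else innerₛₗ ℝ (v j.1)
  have hlt : Module.finrank ℝ ({j : Fin N // j ≠ k} → ℝ) < Module.finrank ℝ E := by
    rw [Module.finrank_eq_card_basis u.toBasis, Module.finrank_fintype_fun_eq_card]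
    apply Fintype.card_subtype_lt (x := k)
    simp
  obtain ⟨x, hx, hx0⟩ := (Submodule.ne_bot_iff _).1 (LinearMap.ker_ne_bot_of_finrank_lt (f := L) hlt)
  have hL : ∀ j : Fin N, ∀ hj : j ≠ k, L x ⟨j, hj⟩ = 0 := by
    intro j hj
    rw [LinearMap.mem_ker.1 hx]; rfl
  have hu : ∀ j, k < j → inner ℝ (u j) x = 0 := by
    intro j hj
    have := hL j hj.ne'
    simpa [L, hj] using this
  have hv : ∀ j, j < k → inner ℝ (v j) x = 0 := by
    intro j hj
    have := hL j hj.ne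
    simpa [L, hj.le.not_gt] using this
  have h1 : a k * ‖x‖ ^ 2 ≤ ∑ j, a j * (inner ℝ (u j) x) ^ 2 := by
    have := u.sum_sq_norm_inner_right x
    rw [← this, Finset.mul_sum]
    refine Finset.sum_le_sum fun j _ => ?_
    rw [Real.norm_eq_abs, sq_abs]
    rcases lt_or_ge k j with hj | hj
    · simp [hu j hj]
    · exact mul_le_mul_of_nonneg_right (ha hj) (sq_nonneg _)
  have h2 : ∑ j, b j * (inner ℝ (v j) x) ^ 2 ≤ b k * ‖x‖ ^ 2 := by
    have := v.sum_sq_norm_inner_right x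
    rw [← this, Finset.mul_sum]
    refine Finset.sum_le_sum fun j _ => ?_
    rw [Real.norm_eq_abs, sq_abs]
    rcases lt_or_ge j k with hj | hj
    · simp [hv j hj]
    · exact mul_le_mul_of_nonneg_right (hb hj) (sq_nonneg _)
  have h3 : 0 < ‖x‖ ^ 2 := by have := norm_pos_iff.2 hx0; positivity
  exact le_of_mul_le_mul_right ((h1.trans (h x)).trans h2) h3

/-- The quadratic form of a matrix. -/
def qf {n : ℕ} (A : SymMat n) (x : Euc n) : ℝ := bilin (A : Matrix (Fin n) (Fin n) ℝ) x x

/-- Sum of arctangents of the eigenvalues. -/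
def GG {n : ℕ} (A : SymMat n) : ℝ := ∑ i, Real.arctan (symEig A i)

theorem qf_add {n : ℕ} (A B : SymMat n) (x : Euc n) : qf (A + B) x = qf A x + qf B x := by
  simp [qf, bilin, add_mul, Finset.sum_add_distrib]

theorem qf_neg {n : ℕ} (A : SymMat n) (x : Euc n) : qf (-A) x = - qf A x := by
  simp [qf, bilin]

theorem qf_smul_one {n : ℕ} (t : ℝ) (x : Euc n) : qf (t • symOne n) x = t * ‖x‖ ^ 2 := by
  simp only [qf, bilin, symOne, EuclideanSpace.norm_sq_eq, Real.norm_eq_abs, sq_abs, Finset.mul_sum]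
  refine Finset.sum_congr rfl fun i _ => ?_
  rw [Finset.sum_eq_single i]
  · simp; ring
  · intro j _ hj
    simp [Matrix.one_apply_ne' hj]
  · simp

theorem qf_eq_dot {n : ℕ} (A : SymMat n) (x : Euc n) :
    qf A x = x.ofLp ⬝ᵥ (A : Matrix (Fin n) (Fin n) ℝ).mulVec x.ofLp := by
  simp only [qf, bilin, dotProduct, Matrix.mulVec, Finset.mul_sum]
  refine Finset.sum_congr rfl fun i _ => Finset.sum_congr rfl fun j _ => ?_
  ring

theorem qf_psd {n : ℕ} (A : SymMat n) (hA : (A : Matrix (Fin n) (Fin n) ℝ).PosSemidef) (x : Euc n) :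
    0 ≤ qf A x := by
  rw [qf_eq_dot]
  simpa using hA.dotProduct_mulVec_nonneg x.ofLp

theorem exists_diag {n : ℕ} (A : SymMat n) :
    ∃ (u : OrthonormalBasis (Fin (Fintype.card (Fin n))) ℝ (Euc n))
      (a : Fin (Fintype.card (Fin n)) → ℝ), Antitone a ∧
      (∀ x, qf A x = ∑ j, a j * (inner ℝ (u j) x) ^ 2) ∧ GG A = ∑ j, Real.arctan (a j) := by
  let e : Fin (Fintype.card (Fin n)) ≃ Fin n := Fintype.equivOfCardEq (Fintype.card_fin _)
  have hH := SymMat.isHermitian A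
  have key : ∀ x, qf A x = ∑ j, hH.eigenvalues j * (inner ℝ (hH.eigenvectorBasis j) x) ^ 2 := by
    intro x
    have h1 : qf A x = inner ℝ x (WithLp.toLp 2 ((A : Matrix (Fin n) (Fin n) ℝ).mulVec x.ofLp)) := by
      rw [qf_eq_dot, EuclideanSpace.inner_eq_star_dotProduct]
      simp [dotProduct_comm]
    rw [h1, ← hH.eigenvectorBasis.sum_inner_mul_inner]
    refine Finset.sum_congr rfl fun j _ => ?_
    have h2 : inner ℝ (hH.eigenvectorBasis j)
        (WithLp.toLp 2 ((A : Matrix (Fin n) (Fin n) ℝ).mulVec x.ofLp))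
        = hH.eigenvalues j * inner ℝ (hH.eigenvectorBasis j) x := by
      have h3 := hH.mulVec_eigenvectorBasis j
      have hT : (A : Matrix (Fin n) (Fin n) ℝ).transpose = A := by
        have h4 := hH.eq
        rwa [Matrix.conjTranspose_eq_transpose_of_trivial] at h4
      simp only [EuclideanSpace.inner_eq_star_dotProduct, star_trivial]
      rw [dotProduct_comm, Matrix.dotProduct_mulVec, ← Matrix.mulVec_transpose, hT, h3,
        smul_dotProduct, smul_eq_mul, dotProduct_comm]
    rw [h2, real_inner_comm]
    ring
  refine ⟨hH.eigenvectorBasis.reindex e.symm, hH.eigenvalues₀, hH.eigenvalues₀_antitone, ?_, ?_⟩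
  · intro x
    rw [key, ← e.sum_comp]
    refine Finset.sum_congr rfl fun j _ => ?_
    simp [Matrix.IsHermitian.eigenvalues, e]
  · unfold GG symEig
    rw [← e.sum_comp]
    refine Finset.sum_congr rfl fun j _ => ?_
    simp [Matrix.IsHermitian.eigenvalues, e]

theorem GG_eq {n : ℕ} (A : SymMat n)
    (u : OrthonormalBasis (Fin (Fintype.card (Fin n))) ℝ (Euc n))
    (a : Fin (Fintype.card (Fin n)) → ℝ) (ha : Antitone a)
    (h : ∀ x, qf A x = ∑ j, a j * (inner ℝ (u j) x) ^ 2) : GG A = ∑ j, Real.arctan (a j) := by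
  obtain ⟨v, b, hb, h', hG⟩ := exists_diag A
  have : a = b := by
    funext k
    apply le_antisymm
    · exact weyl_aux u v a b ha hb (fun x => by rw [← h, ← h']) k
    · exact weyl_aux v u b a hb ha (fun x => by rw [← h, ← h']) k
  rw [hG, this]

theorem GG_mono {n : ℕ} (A B : SymMat n) (h : ∀ x, qf A x ≤ qf B x) : GG A ≤ GG B := by
  obtain ⟨u, a, ha, h1, hG⟩ := exists_diag A
  obtain ⟨v, b, hb, h2, hG'⟩ := exists_diag B
  rw [hG, hG']
  refine Finset.sum_le_sum fun k _ => Real.arctan_strictMono.monotone ?_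
  exact weyl_aux u v a b ha hb (fun x => by rw [← h1, ← h2]; exact h x) k

theorem GG_neg {n : ℕ} (A : SymMat n) : GG (-A) = - GG A := by
  obtain ⟨u, a, ha, h1, hG⟩ := exists_diag A
  rw [GG_eq (-A) (u.reindex Fin.revPerm) (fun j => - a (Fin.rev j)), hG,
    ← Equiv.sum_comp Fin.revPerm]
  · simp [Real.arctan_neg]
  · intro i j hij
    exact neg_le_neg (ha (Fin.rev_le_rev.2 hij))
  · intro x
    rw [qf_neg, h1, ← Equiv.sum_comp Fin.revPerm]
    simp

theorem GG_shift {n : ℕ} (A : SymMat n) : ∃ a : Fin n → ℝ,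
    ∀ t : ℝ, GG (A + t • symOne n) = ∑ j, Real.arctan (a j + t) := by
  obtain ⟨u, a, ha, h1, hG⟩ := exists_diag A
  refine ⟨fun j => a (Fin.cast (Fintype.card_fin n).symm j), fun t => ?_⟩
  rw [GG_eq (A + t • symOne n) u (fun j => a j + t)]
  · exact (Equiv.sum_comp (finCongr (Fintype.card_fin n).symm) (fun j => Real.arctan (a j + t))).symm
  · intro i j hij
    exact add_le_add_left (ha hij) t
  · intro x
    rw [qf_add, h1, qf_smul_one, ← u.sum_sq_norm_inner_right x, Finset.mul_sum,
      ← Finset.sum_add_distrib]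
    refine Finset.sum_congr rfl fun j _ => ?_
    rw [Real.norm_eq_abs, sq_abs]
    ring

theorem GG_smul_one {n : ℕ} (t : ℝ) : GG (t • symOne n) = n * Real.arctan t := by
  rw [GG_eq (t • symOne n) ((EuclideanSpace.basisFun (Fin n) ℝ).reindex
    (finCongr (Fintype.card_fin n).symm)) (fun _ => t) antitone_const]
  · simp
  · intro x
    rw [qf_smul_one, ← OrthonormalBasis.sum_sq_norm_inner_right ((EuclideanSpace.basisFun (Fin n) ℝ).reindex
      (finCongr (Fintype.card_fin n).symm)) x, Finset.mul_sum]
    refine Finset.sum_congr rfl fun j _ => ?_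
    rw [Real.norm_eq_abs, sq_abs]

theorem GG_lt {n : ℕ} (hn : 1 ≤ n) (A : SymMat n) (t : ℝ) (ht : t < 0) :
    GG (A + t • symOne n) < GG A := by
  obtain ⟨a, ha⟩ := GG_shift A
  have h0 := ha 0
  rw [zero_smul, add_zero] at h0
  rw [h0, ha]
  refine Finset.sum_lt_sum_of_nonempty ⟨⟨0, hn⟩, Finset.mem_univ _⟩ fun j _ => ?_
  exact Real.arctan_strictMono (by linarith)

theorem GG_shift_cont {n : ℕ} (A : SymMat n) : Continuous fun t : ℝ => GG (A + t • symOne n) := by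
  obtain ⟨a, ha⟩ := GG_shift A
  simp_rw [ha]
  refine continuous_finset_sum _ fun j _ => Real.continuous_arctan.comp (by fun_prop)

theorem qf_near {n : ℕ} (A : SymMat n) (ε : ℝ) (hε : 0 < ε) :
    ∀ᶠ B in 𝓝 A, ∀ x, |qf B x - qf A x| ≤ ε * ‖x‖ ^ 2 := by
  have hδ : 0 < ε / ((n : ℝ) * n + 1) := by positivity
  have h : ∀ᶠ B : SymMat n in 𝓝 A, ∀ i j,
      |(B : Matrix (Fin n) (Fin n) ℝ) i j - (A : Matrix (Fin n) (Fin n) ℝ) i j|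
        < ε / ((n : ℝ) * n + 1) := by
    refine eventually_all.2 fun i => eventually_all.2 fun j => ?_
    have hc : Continuous fun B : SymMat n => |(B : Matrix (Fin n) (Fin n) ℝ) i j
      - (A : Matrix (Fin n) (Fin n) ℝ) i j| :=
      ((continuous_subtype_val.matrix_elem i j).sub continuous_const).abs
    have := hc.tendsto A
    simp only [sub_self, abs_zero] at this
    exact this.eventually_lt_const hδ
  filter_upwards [h] with B hB x
  have hxi : ∀ i, |x i| ≤ ‖x‖ := fun i => by
    simpa using PiLp.norm_apply_le x i
  have e : qf B x - qf A x = ∑ i, ∑ j, ((B : Matrix (Fin n) (Fin n) ℝ) i j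
      - (A : Matrix (Fin n) (Fin n) ℝ) i j) * x i * x j := by
    simp [qf, bilin, sub_mul]
  rw [e]
  calc _ ≤ ∑ i : Fin n, ∑ j : Fin n, ε / ((n : ℝ) * n + 1) * ‖x‖ * ‖x‖ := by
        refine (Finset.abs_sum_le_sum_abs _ _).trans (Finset.sum_le_sum fun i _ => ?_)
        refine (Finset.abs_sum_le_sum_abs _ _).trans (Finset.sum_le_sum fun j _ => ?_)
        rw [abs_mul, abs_mul]
        have := (hB i j).le
        have := hxi i
        have := hxi j
        gcongr
    _ = ε * ‖x‖ ^ 2 * (((n : ℝ) * n) / ((n : ℝ) * n + 1)) := by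
        simp; ring
    _ ≤ ε * ‖x‖ ^ 2 * 1 := by
        gcongr
        rw [div_le_one (by positivity)]
        linarith
    _ = _ := mul_one _

theorem GG_continuous {n : ℕ} : Continuous (GG : SymMat n → ℝ) := by
  rw [continuous_iff_continuousAt]
  intro A
  have hc := (GG_shift_cont A).tendsto 0
  simp only [zero_smul, add_zero] at hc
  refine tendsto_order.2 ⟨fun c hcA => ?_, fun c hcA => ?_⟩
  · have h1 := (hc.eventually_const_lt hcA).filter_mono (nhdsWithin_le_nhds (s := Iio 0))
    obtain ⟨t, ht, ht0⟩ := (h1.and self_mem_nhdsWithin).exists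
    have ht0 : t < 0 := ht0
    filter_upwards [qf_near A (-t) (by linarith)] with B hB
    refine ht.trans_le (GG_mono _ _ fun x => ?_)
    rw [qf_add, qf_smul_one]
    have := (abs_le.1 (hB x)).1
    linarith
  · have h1 := (hc.eventually_lt_const hcA).filter_mono (nhdsWithin_le_nhds (s := Ioi 0))
    obtain ⟨t, ht, ht0⟩ := (h1.and self_mem_nhdsWithin).exists
    have ht0 : 0 < t := ht0
    filter_upwards [qf_near A t ht0] with B hB
    refine (GG_mono _ _ fun x => ?_).trans_lt ht
    rw [qf_add, qf_smul_one]
    have := (abs_le.1 (hB x)).2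
    linarith

theorem interior_GG {n : ℕ} (hn : 1 ≤ n) (c : ℝ) :
    interior {A : SymMat n | c ≤ GG A} = {A | c < GG A} := by
  apply Subset.antisymm
  · intro A hA
    have hmem : ∀ᶠ B in 𝓝 A, c ≤ GG B := mem_interior_iff_mem_nhds.1 hA
    have hc : Continuous fun t : ℝ => A + t • symOne n := by
      refine continuous_induced_rng.2 ?_
      change Continuous fun t : ℝ => (A : Matrix (Fin n) (Fin n) ℝ) +
        t • (symOne n : Matrix (Fin n) (Fin n) ℝ)
      fun_prop
    have ht := hc.tendsto 0
    simp only [zero_smul, add_zero] at ht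
    have h1 := (ht.eventually hmem).filter_mono (nhdsWithin_le_nhds (s := Iio 0))
    obtain ⟨t, ht, ht0⟩ := (h1.and self_mem_nhdsWithin).exists
    exact ht.trans_lt (GG_lt hn A t ht0)
  · exact interior_maximal (fun A (hA : c < GG A) => hA.le)
      (isOpen_lt continuous_const GG_continuous)

theorem exists_GG_gt {n : ℕ} (c : ℝ) (hc : c < n * Real.pi / 2) (hn : 1 ≤ n) :
    ∃ A : SymMat n, c < GG A := by
  have h : Tendsto (fun t : ℝ => (n : ℝ) * Real.arctan t) atTop (𝓝 (n * (Real.pi / 2))) :=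
    (tendsto_nhds_of_tendsto_nhdsWithin Real.tendsto_arctan_atTop).const_mul _
  rw [← mul_div_assoc] at h
  obtain ⟨t, ht⟩ := (h.eventually_const_lt hc).exists
  exact ⟨t • symOne n, by rwa [GG_smul_one]⟩

/-- Proposition 10.4: for `−nπ/2 < c < nπ/2`, the set
`F_c = {A : Σᵢ arctan λᵢ(A) ≥ c}` is a Dirichlet set and its Dirichlet dual is `F_{−c}`. -/
theorem specialLagrangian_branches_dirichlet {n : ℕ} (hn : 1 ≤ n) (c : ℝ)
    (hc1 : -(n * Real.pi / 2) < c) (hc2 : c < n * Real.pi / 2) :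
    IsDirichletSet {A : SymMat n | c ≤ ∑ i, Real.arctan (symEig A i)} ∧
    dirDual {A : SymMat n | c ≤ ∑ i, Real.arctan (symEig A i)} =
      {A : SymMat n | -c ≤ ∑ i, Real.arctan (symEig A i)} := by
  change IsDirichletSet {A : SymMat n | c ≤ GG A} ∧
    dirDual {A : SymMat n | c ≤ GG A} = {A : SymMat n | -c ≤ GG A}
  refine ⟨⟨?_, ?_, ?_, ?_⟩, ?_⟩
  · obtain ⟨A, hA⟩ := exists_GG_gt c hc2 hn
    exact ⟨A, hA.le⟩
  · intro h
    obtain ⟨A, hA⟩ := exists_GG_gt (-c) (by linarith) hn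
    have h1 : -A ∈ {A : SymMat n | c ≤ GG A} := by rw [h]; trivial
    have h2 : c ≤ GG (-A) := h1
    rw [GG_neg] at h2
    linarith
  · exact isClosed_le continuous_const GG_continuous
  · intro A hA P hP
    refine le_trans (show c ≤ GG A from hA) (GG_mono _ _ fun x => ?_)
    rw [qf_add]
    linarith [qf_psd P hP x]
  · ext A
    simp only [dirDual, interior_GG hn, mem_setOf_eq, GG_neg, not_lt]
    exact ⟨fun h => by linarith, fun h => by linarith⟩
end
end
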